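/- Let P be a d-dimensional isotropic simplicial polytope that is a local extremum (with respect to the Hausdorff metric on the space of d-dimensional convex bodies) of the functional K ↦ L_K. Then P is isohedral: for any two facets F₁ and F₂ of P there exists an isometry of ℝ^d mapping P onto itself and mapping F₁ onto F₂. In particular, all facets of P are congruent. -/

import Mathlib

open MeasureTheory Finset
open scoped ProbabilityTheory
open scoped RealInnerProductSpace

noncomputable section

abbrev Euc (d : ℕ) := EuclideanSpace ℝ (Fin d)

section GeneralSpace

variable {V : Type*} [NormedAddCommGroup V] [NormedSpace ℝ V]

/-- The dimension of a set: the rank of the direction of its affine span. -/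
noncomputable def sdim (F : Set V) : ℕ := Module.finrank ℝ (affineSpan ℝ F).direction

/-- `F` is a simplex with `n` vertices (an `(n-1)`-dimensional simplex). -/
def IsSimplexWith (n : ℕ) (F : Set V) : Prop :=
  ∃ w : Fin n → V, AffineIndependent ℝ w ∧ F = convexHull ℝ (Set.range w)

/-- A polytope is the convex hull of finitely many points. -/
def IsPolytope (P : Set V) : Prop := ∃ S : Finset V, P = convexHull ℝ (S : Set V)

/-- A facet of a `d`-dimensional polytope: an exposed face of dimension `d - 1`. -/
def IsFacetOf (d : ℕ) (P F : Set V) : Prop := IsExposed ℝ P F ∧ sdim F = d - 1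

/-- A `d`-dimensional simplicial polytope: a polytope of dimension `d`, each facet of which
is a `(d-1)`-dimensional simplex (i.e. has `d` affinely independent vertices). -/
def IsSimplicialPolytope (d : ℕ) (P : Set V) : Prop :=
  IsPolytope P ∧ sdim P = d ∧ ∀ F : Set V, IsFacetOf d P F → IsSimplexWith d F

end GeneralSpace

/-- A convex body: compact, convex, with nonempty interior. -/
def IsConvexBody {d : ℕ} (K : Set (Euc d)) : Prop :=
  IsCompact K ∧ Convex ℝ K ∧ (interior K).Nonempty

/-- The barycenter `μ_K` of the uniform distribution on `K`. -/
noncomputable def centroid {d : ℕ} (K : Set (Euc d)) : Euc d :=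
  (volume K).toReal⁻¹ • ∫ x in K, x

/-- The covariance matrix `A(K)` of the uniform distribution on `K`. -/
noncomputable def covMatrix {d : ℕ} (K : Set (Euc d)) : Matrix (Fin d) (Fin d) ℝ :=
  Matrix.of fun i j =>
    (volume K).toReal⁻¹ * ∫ x in K, (x i - centroid K i) * (x j - centroid K j)

/-- The isotropic constant `L_K`, defined by `L_K ^ (2d) = det A(K) / vol(K) ^ 2`. -/
noncomputable def isoConst {d : ℕ} (K : Set (Euc d)) : ℝ :=
  ((covMatrix K).det / (volume K).toReal ^ 2) ^ ((2 * (d : ℝ))⁻¹)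

/-- `K` is isotropic: its barycenter is the origin and its covariance matrix is the identity. -/
def IsIsotropic {d : ℕ} (K : Set (Euc d)) : Prop :=
  centroid K = 0 ∧ covMatrix K = 1

/-- `P` is a local extremum (local maximum or local minimum) of `K ↦ L_K` among convex bodies,
with respect to the Hausdorff metric. -/
def IsLocalExtremumOfIsoConst {d : ℕ} (P : Set (Euc d)) : Prop :=
  (∃ ε > 0, ∀ K : Set (Euc d), IsConvexBody K →
      Metric.hausdorffDist K P < ε → isoConst K ≤ isoConst P) ∨
  (∃ ε > 0, ∀ K : Set (Euc d), IsConvexBody K →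
      Metric.hausdorffDist K P < ε → isoConst P ≤ isoConst K)

/-- The polar angle of `(a, b) ∈ ℝ²`, normalized to lie in `[-π, π)`. -/
noncomputable def polarAngle (a b : ℝ) : ℝ :=
  if Complex.arg ⟨a, b⟩ = Real.pi then -Real.pi else Complex.arg ⟨a, b⟩

/-!
Pulling a boundary point `q` of `P` outwards glues a thin simplex onto the facet containing `q`.
At an isotropic body the derivative of `L_K ^ (2 * d)` along such a variation is the excess of the
second moment of the glued simplex over `d + 2` times its volume, so at a local extremum this excess
has a constant sign. The second moment is a quadratic polynomial in `q` and the vertices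
`v₁, …, v_d` of the facet; evaluated at `q = v_m` it bounds the quantities
`⟪v_m, v_m + ∑ j, v_j⟫ - (d + 1) * (d + 2)` on one side. Isotropy of `P` says that a positive
combination of them over all facets vanishes, hence they all vanish. Consequently adjacent facets
are exchanged by the reflection in the hyperplane spanned by the origin and their common ridge;
following facets through ridges, this reflection preserves `P`, and since any two facets are joined
by a chain of adjacent ones, `P` is isohedral.
-/

open scoped Topology

section Shear

variable {E : Type*} [AddCommGroup E] [Module ℝ E]

/-- The affine map `x ↦ x + f x • w`. Moving one vertex of a simplex along a line while fixing the
others is a map of this form. -/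
def affineShear (f : E →ᵃ[ℝ] ℝ) (w : E) : E →ᵃ[ℝ] E where
  toFun x := x + f x • w
  linear := LinearMap.transvection f.linear w
  map_vadd' x v := by
    rw [AffineMap.map_vadd, LinearMap.transvection.apply, vadd_eq_add, vadd_eq_add, vadd_eq_add]
    module

@[simp]
lemma affineShear_apply (f : E →ᵃ[ℝ] ℝ) (w x : E) : affineShear f w x = x + f x • w := rfl

lemma affineShear_injective {f : E →ᵃ[ℝ] ℝ} {w : E} (h : 1 + f.linear w ≠ 0) :
    Function.Injective (affineShear f w) := by
  intro x y hxy
  have hf : (1 + f.linear w) * f x = (1 + f.linear w) * f y := by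
    have := congrArg f hxy
    simp only [affineShear_apply, add_comm _ (_ • w), ← vadd_eq_add, AffineMap.map_vadd, map_smul,
      smul_eq_mul] at this
    simp only [vadd_eq_add] at this
    linear_combination this
  simpa [mul_left_cancel₀ h hf] using hxy

end Shear

section ShearIntegral

variable {E : Type*} [NormedAddCommGroup E] [NormedSpace ℝ E] [FiniteDimensional ℝ E]
  [MeasurableSpace E] [BorelSpace E] (μ : Measure E) [μ.IsAddHaarMeasure]

lemma setIntegral_image_affineShear {f : E →ᵃ[ℝ] ℝ} {w : E} (h : 1 + f.linear w ≠ 0) {s : Set E}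
    (hs : MeasurableSet s) (φ : E → ℝ) :
    ∫ x in affineShear f w '' s, φ x ∂μ =
      |1 + f.linear w| * ∫ x in s, φ (affineShear f w x) ∂μ := by
  have hderiv (x : E) : HasFDerivAt (affineShear f w)
      (LinearMap.toContinuousLinearMap (LinearMap.transvection f.linear w)) x := by
    have heq : ⇑(affineShear f w) =
        fun x => LinearMap.toContinuousLinearMap (LinearMap.transvection f.linear w) x
          + affineShear f w 0 :=
      (affineShear f w).decomp
    rw [heq]
    exact (ContinuousLinearMap.hasFDerivAt _).add_const _
  rw [integral_image_eq_integral_abs_det_fderiv_smul μ hs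
    (fun x _ => (hderiv x).hasFDerivWithinAt) (affineShear_injective h).injOn,
    LinearMap.det_toContinuousLinearMap, LinearMap.transvection.det]
  exact integral_const_mul _ _

lemma addHaar_setOf_eq_eq_zero {f g : E →ᵃ[ℝ] ℝ} (hfg : f ≠ g) : μ {x | f x = g x} = 0 := by
  have heq : {x | f x = g x} = (AffineSubspace.mk' (0 : ℝ) ⊥).comap (f - g) := by
    ext x
    simp [AffineSubspace.mem_mk', sub_eq_zero]
  rw [heq]
  refine Measure.addHaar_affineSubspace _ _ fun htop => hfg (AffineMap.ext fun x => ?_)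
  have hx : x ∈ ((AffineSubspace.mk' (0 : ℝ) ⊥).comap (f - g) : Set E) := by
    rw [htop]
    exact AffineSubspace.mem_top ℝ E x
  rwa [← heq] at hx

end ShearIntegral

section Bisection

variable {E I : Type*} [AddCommGroup E] [Module ℝ E] (b : AffineBasis I ℝ E)

variable {b} in
lemma mem_convexHull_range_affineBasis {x : E} :
    x ∈ convexHull ℝ (Set.range b) ↔ ∀ i, 0 ≤ b.coord i x := by
  rw [b.convexHull_eq_nonneg_coord, Set.mem_ofPred_eq]

lemma coord_add_smul_sub [DecidableEq I] (i j k : I) (x : E) (r : ℝ) :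
    b.coord k (x + r • (b i - b j)) =
      b.coord k x + r * ((if k = i then 1 else 0) - (if k = j then 1 else 0)) := by
  have hlin : (b.coord k).linear (b i - b j) = b.coord k (b i) - b.coord k (b j) :=
    (b.coord k).linearMap_vsub _ _
  rw [add_comm, ← vadd_eq_add, AffineMap.map_vadd, map_smul, hlin, b.coord_apply, b.coord_apply,
    vadd_eq_add, smul_eq_mul, add_comm]

/-- The affine map fixing all vertices of a simplex except the `j`-th, which it sends to the
midpoint of the edge from the `i`-th to the `j`-th. -/
def bisectEdge (i j : I) : E →ᵃ[ℝ] E := affineShear ((2⁻¹ : ℝ) • b.coord j) (b i - b j)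

lemma bisectEdge_apply (i j : I) (x : E) :
    bisectEdge b i j x = x + (2⁻¹ * b.coord j x) • (b i - b j) := rfl

variable {i j : I}

lemma coord_bisectEdge_left (hij : i ≠ j) (x : E) :
    b.coord i (bisectEdge b i j x) = b.coord i x + b.coord j x / 2 := by
  classical
  rw [bisectEdge_apply, coord_add_smul_sub, if_pos rfl, if_neg hij]
  ring

lemma coord_bisectEdge_right (hij : i ≠ j) (x : E) :
    b.coord j (bisectEdge b i j x) = b.coord j x / 2 := by
  classical
  rw [bisectEdge_apply, coord_add_smul_sub, if_pos rfl, if_neg hij.symm]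
  ring

lemma image_bisectEdge (hij : i ≠ j) :
    bisectEdge b i j '' convexHull ℝ (Set.range b) =
      {x ∈ convexHull ℝ (Set.range b) | b.coord j x ≤ b.coord i x} := by
  classical
  ext x
  simp only [Set.mem_image, Set.mem_ofPred_eq, mem_convexHull_range_affineBasis]
  constructor
  · rintro ⟨y, hy, rfl⟩
    refine ⟨fun k => ?_, ?_⟩
    · have hk := hy k
      have hj := hy j
      rw [bisectEdge_apply, coord_add_smul_sub]
      split_ifs with hki hkj hkj
      · linarith
      · linarith
      · rw [hkj]; linarith
      · linarith
    · rw [coord_bisectEdge_left b hij, coord_bisectEdge_right b hij]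
      linarith [hy i]
  · rintro ⟨hx, hji⟩
    refine ⟨x + (-b.coord j x) • (b i - b j), fun k => ?_, ?_⟩
    · rw [coord_add_smul_sub]
      split_ifs with hki hkj hkj
      · linarith [hx k]
      · rw [hki]; linarith
      · rw [hkj]; linarith [hx j]
      · linarith [hx k]
    · rw [bisectEdge_apply, coord_add_smul_sub, if_pos rfl, if_neg hij.symm]
      module

end Bisection

section BisectionIntegral

variable {E I : Type*} [NormedAddCommGroup E] [NormedSpace ℝ E] [Finite I]
  (b : AffineBasis I ℝ E)

lemma isCompact_convexHull_range_affineBasis : IsCompact (convexHull ℝ (Set.range b)) :=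
  (Set.finite_range b).isCompact_convexHull ℝ

variable [FiniteDimensional ℝ E] [MeasurableSpace E] [BorelSpace E] (μ : Measure E)
  [μ.IsAddHaarMeasure] {i j : I}

lemma setIntegral_image_bisectEdge (hij : i ≠ j) (φ : E → ℝ) :
    ∫ x in bisectEdge b i j '' convexHull ℝ (Set.range b), φ x ∂μ =
      2⁻¹ * ∫ x in convexHull ℝ (Set.range b), φ (bisectEdge b i j x) ∂μ := by
  have hdet : 1 + ((2⁻¹ : ℝ) • b.coord j).linear (b i - b j) = 2⁻¹ := by
    have hlin : (b.coord j).linear (b i - b j) = b.coord j (b i) - b.coord j (b j) :=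
      (b.coord j).linearMap_vsub _ _
    rw [AffineMap.smul_linear, LinearMap.smul_apply, hlin, b.coord_apply_ne hij.symm,
      b.coord_apply_eq]
    norm_num
  rw [bisectEdge, setIntegral_image_affineShear μ (by rw [hdet]; norm_num)
    (isCompact_convexHull_range_affineBasis b).measurableSet, hdet, abs_of_pos (by norm_num)]

/-- Each half of a simplex cut through the midpoint of an edge is an affine image of the whole
simplex, with volume ratio `1 / 2`. -/
lemma setIntegral_convexHull_eq_bisectEdge (hij : i ≠ j) {φ : E → ℝ} (hφ : Continuous φ) :
    ∫ x in convexHull ℝ (Set.range b), φ x ∂μ =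
      2⁻¹ * ∫ x in convexHull ℝ (Set.range b), φ (bisectEdge b i j x) ∂μ +
      2⁻¹ * ∫ x in convexHull ℝ (Set.range b), φ (bisectEdge b j i x) ∂μ := by
  set Δ := convexHull ℝ (Set.range b)
  have hΔ : IsCompact Δ := isCompact_convexHull_range_affineBasis b
  have hcont (k l : I) : Continuous (bisectEdge b k l) :=
    (bisectEdge b k l).continuous_of_finiteDimensional
  have hunion : bisectEdge b i j '' Δ ∪ bisectEdge b j i '' Δ = Δ := by
    rw [image_bisectEdge b hij, image_bisectEdge b hij.symm, ← Set.sep_or]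
    exact Set.sep_eq_self_iff_mem_true.2 fun x _ => le_total _ _
  have hne : b.coord i ≠ b.coord j := fun h => by
    have := congrArg (fun f : E →ᵃ[ℝ] ℝ => f (b i)) h
    simp only [b.coord_apply_eq, b.coord_apply_ne hij.symm] at this
    exact one_ne_zero this
  have hdisj : AEDisjoint μ (bisectEdge b i j '' Δ) (bisectEdge b j i '' Δ) := by
    rw [image_bisectEdge b hij, image_bisectEdge b hij.symm]
    exact measure_mono_null (fun x hx => le_antisymm hx.2.2 hx.1.2)
      (addHaar_setOf_eq_eq_zero μ hne)
  have hint (k l : I) : IntegrableOn φ (bisectEdge b k l '' Δ) μ :=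
    hφ.continuousOn.integrableOn_compact (hΔ.image (hcont k l))
  rw [← setIntegral_image_bisectEdge b μ hij, ← setIntegral_image_bisectEdge b μ hij.symm,
    ← setIntegral_union₀ hdisj (hΔ.image (hcont j i)).measurableSet.nullMeasurableSet (hint i j)
      (hint j i), hunion]

lemma integrableOn_coord_mul_coord (i j : I) :
    IntegrableOn (fun x => b.coord i x * b.coord j x) (convexHull ℝ (Set.range b)) μ :=
  ((continuous_barycentric_coord b i).mul
    (continuous_barycentric_coord b j)).continuousOn.integrableOn_compact
      (isCompact_convexHull_range_affineBasis b)

lemma setIntegral_coord_sq_bisection (hij : i ≠ j) :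
    3 * ∫ x in convexHull ℝ (Set.range b), b.coord j x * b.coord j x ∂μ =
      (∫ x in convexHull ℝ (Set.range b), b.coord i x * b.coord i x ∂μ) +
      4 * ∫ x in convexHull ℝ (Set.range b), b.coord i x * b.coord j x ∂μ := by
  have hleft (x : E) : b.coord j (bisectEdge b i j x) * b.coord j (bisectEdge b i j x) =
      4⁻¹ * (b.coord j x * b.coord j x) := by
    rw [coord_bisectEdge_right b hij]
    ring
  have hright (x : E) : b.coord j (bisectEdge b j i x) * b.coord j (bisectEdge b j i x) =
      b.coord j x * b.coord j x + b.coord i x * b.coord j x +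
        4⁻¹ * (b.coord i x * b.coord i x) := by
    rw [coord_bisectEdge_left b hij.symm]
    ring
  have hint := integrableOn_coord_mul_coord b μ
  have h := setIntegral_convexHull_eq_bisectEdge b μ hij
    (φ := fun x => b.coord j x * b.coord j x)
    ((continuous_barycentric_coord b j).mul (continuous_barycentric_coord b j))
  simp only [hleft, hright] at h
  rw [integral_add ((hint j j).fun_add (hint i j)) ((hint i i).const_mul _),
    integral_add (hint j j) (hint i j), integral_const_mul, integral_const_mul] at h
  linarith

end BisectionIntegral

section SimplexMoments

variable {E I : Type*} [NormedAddCommGroup E] [NormedSpace ℝ E] [FiniteDimensional ℝ E]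
  [MeasurableSpace E] [BorelSpace E] [Fintype I] (b : AffineBasis I ℝ E) (μ : Measure E)
  [μ.IsAddHaarMeasure]

lemma setIntegral_sum_sum_coord_mul_coord (g : I → I → ℝ) :
    ∫ x in convexHull ℝ (Set.range b), ∑ i, ∑ j, b.coord i x * b.coord j x * g i j ∂μ =
      ∑ i, ∑ j, (∫ x in convexHull ℝ (Set.range b), b.coord i x * b.coord j x ∂μ) * g i j := by
  have hint (i j : I) := (integrableOn_coord_mul_coord b μ i j).mul_const (g i j)
  rw [integral_finsetSum _ fun i _ => integrable_finsetSum _ fun j _ => hint i j]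
  refine sum_congr rfl fun i _ => ?_
  rw [integral_finsetSum _ fun j _ => hint i j]
  exact sum_congr rfl fun j _ => integral_mul_const _ _

lemma setIntegral_coord_mul_coord [DecidableEq I] (i j : I) :
    ∫ x in convexHull ℝ (Set.range b), b.coord i x * b.coord j x ∂μ =
      μ.real (convexHull ℝ (Set.range b)) / (Fintype.card I * (Fintype.card I + 1)) *
        (1 + if i = j then 1 else 0) := by
  set M := fun k l => ∫ x in convexHull ℝ (Set.range b), b.coord k x * b.coord l x ∂μ with hM
  have hcomm (k l : I) : M k l = M l k := by simp only [hM, mul_comm]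
  have hbisect {k l : I} (hkl : k ≠ l) : 3 * M l l = M k k + 4 * M k l :=
    setIntegral_coord_sq_bisection b μ hkl
  have hM_eq (k l : I) : M k l = M i i / 2 * (1 + if k = l then 1 else 0) := by
    have hdiag (k : I) : M k k = M i i := by
      rcases eq_or_ne k i with rfl | hki
      · rfl
      · linarith [hbisect hki, hbisect hki.symm, hcomm k i]
    split_ifs with hkl
    · rw [hkl, hdiag]; ring
    · linarith [hbisect hkl, hdiag k, hdiag l]
  have hsum : μ.real (convexHull ℝ (Set.range b)) =
      M i i / 2 * (Fintype.card I * (Fintype.card I + 1)) := by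
    have h := setIntegral_sum_sum_coord_mul_coord b μ fun _ _ => 1
    simp only [mul_one, ← mul_sum, b.sum_coord_apply_eq_one] at h
    rw [setIntegral_const, smul_eq_mul, mul_one] at h
    rw [h]
    change ∑ k, ∑ l, M k l = _
    rw [sum_congr rfl fun k _ => sum_congr rfl fun l _ => hM_eq k l]
    simp only [mul_add, mul_one, mul_ite, mul_zero, sum_add_distrib, sum_const, card_univ,
      nsmul_eq_mul, sum_ite_eq, mem_univ, if_true]
    ring
  have hcard : (0 : ℝ) < Fintype.card I := by
    have : Nonempty I := ⟨i⟩
    exact_mod_cast Fintype.card_pos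
  change M i j = _
  rw [hsum, hM_eq, mul_div_cancel_right₀ _ (by positivity)]

lemma setIntegral_norm_sq_sum_coord_smul {F : Type*} [NormedAddCommGroup F] [InnerProductSpace ℝ F]
    (u : I → F) :
    ∫ x in convexHull ℝ (Set.range b), ‖∑ i, b.coord i x • u i‖ ^ 2 ∂μ =
      μ.real (convexHull ℝ (Set.range b)) / (Fintype.card I * (Fintype.card I + 1)) *
        (‖∑ i, u i‖ ^ 2 + ∑ i, ‖u i‖ ^ 2) := by
  classical
  have hexpand (a : I → ℝ) : ‖∑ i, a i • u i‖ ^ 2 = ∑ i, ∑ j, a i * a j * ⟪u i, u j⟫ := by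
    rw [← real_inner_self_eq_norm_sq, sum_inner]
    simp_rw [inner_sum, real_inner_smul_left, real_inner_smul_right, mul_assoc]
  have hone : ‖∑ i, u i‖ ^ 2 = ∑ i, ∑ j, ⟪u i, u j⟫ := by
    simpa only [one_smul, one_mul] using hexpand fun _ => 1
  simp only [hexpand (fun i => b.coord i _)]
  rw [setIntegral_sum_sum_coord_mul_coord, hone]
  simp_rw [setIntegral_coord_mul_coord, mul_assoc, ← mul_sum, add_mul, sum_add_distrib, ite_mul,
    one_mul, zero_mul, sum_ite_eq, mem_univ, if_true, real_inner_self_eq_norm_sq]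

end SimplexMoments

section OneSidedDerivative

lemma hasDerivWithinAt_Ioi_nonpos_of_isLocalMaxOn {f : ℝ → ℝ} {f' a : ℝ}
    (h : HasDerivWithinAt f f' (Set.Ioi a) a) (hmax : IsLocalMaxOn f (Set.Ioi a) a) : f' ≤ 0 := by
  have hcone : (1 : ℝ) ∈ posTangentConeAt (Set.Ioi a) a := by
    refine mem_posTangentConeAt_of_frequently_mem (Filter.Eventually.frequently ?_)
    filter_upwards [self_mem_nhdsWithin] with t ht
    simpa using ht
  simpa using hmax.hasFDerivWithinAt_nonpos h.hasFDerivWithinAt hcone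

lemma hasDerivWithinAt_det_of_eq_one {𝕜 n : Type*} [NontriviallyNormedField 𝕜] [Fintype n]
    [DecidableEq n] {A : 𝕜 → Matrix n n 𝕜} {A' : Matrix n n 𝕜} {s : Set 𝕜} {x : 𝕜}
    (hA : ∀ i j, HasDerivWithinAt (fun t => A t i j) (A' i j) s x) (h1 : A x = 1) :
    HasDerivWithinAt (fun t => (A t).det) A'.trace s x := by
  simp only [Matrix.det_apply']
  have h := HasDerivWithinAt.fun_sum fun (σ : Equiv.Perm n) (_ : σ ∈ univ) =>
    (HasDerivWithinAt.fun_finsetProd fun i (_ : i ∈ univ) => hA (σ i) i).const_mul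
      ((Equiv.Perm.sign σ : ℤ) : 𝕜)
  refine h.congr_deriv ?_
  rw [Fintype.sum_eq_single 1]
  · simp [h1, Matrix.trace]
  · intro σ hσ
    rw [sum_eq_zero, mul_zero]
    intro i _
    obtain ⟨j, hj, hσj⟩ : ∃ j, j ≠ i ∧ σ j ≠ j := by
      obtain ⟨k, hk⟩ := DFunLike.ne_iff.1 hσ
      rcases eq_or_ne k i with rfl | hki
      · exact ⟨σ k, hk, fun h => hk (σ.injective h)⟩
      · exact ⟨k, hki, hk⟩
    rw [prod_eq_zero (mem_erase.2 ⟨hj, mem_univ j⟩), zero_smul]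
    rw [h1, Matrix.one_apply_ne hσj]

end OneSidedDerivative

section Moments

variable {d : ℕ} {K : Set (Euc d)}

lemma IsConvexBody.volume_real_pos (hK : IsConvexBody K) : 0 < volume.real K :=
  ENNReal.toReal_pos (Measure.measure_pos_of_nonempty_interior _ hK.2.2).ne' hK.1.measure_ne_top

lemma centroid_apply (hK : IsCompact K) (i : Fin d) :
    centroid K i = (volume.real K)⁻¹ * ∫ x in K, x i := by
  have hint : IntegrableOn (fun x : Euc d => x) K :=
    continuous_id.continuousOn.integrableOn_compact hK
  have h := (EuclideanSpace.proj (𝕜 := ℝ) i : Euc d →L[ℝ] ℝ).integral_comp_comm hint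
  exact congrArg ((volume.real K)⁻¹ * ·) h.symm

lemma covMatrix_apply (hK : IsConvexBody K) (i j : Fin d) :
    covMatrix K i j = (∫ x in K, x i * x j) / volume.real K -
      (∫ x in K, x i) * (∫ x in K, x j) / volume.real K ^ 2 := by
  have hvol := hK.volume_real_pos.ne'
  have hexpand (x : Euc d) : (x i - centroid K i) * (x j - centroid K j) =
      (x i * x j - centroid K j * x i) - (centroid K i * x j - centroid K i * centroid K j) := by
    ring
  have hint {φ : Euc d → ℝ} (hφ : Continuous φ) : IntegrableOn φ K :=
    hφ.continuousOn.integrableOn_compact hK.1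
  simp only [covMatrix, Matrix.of_apply, hexpand]
  rw [integral_sub (hint (by fun_prop)) (hint (by fun_prop)),
    integral_sub (hint (by fun_prop)) (hint (by fun_prop)),
    integral_sub (hint (by fun_prop)) (hint (by fun_prop)), integral_const_mul, integral_const_mul,
    setIntegral_const, centroid_apply hK.1, centroid_apply hK.1, ← Measure.real, smul_eq_mul]
  field_simp
  ring

lemma IsIsotropic.setIntegral_coord (hiso : IsIsotropic K) (hK : IsConvexBody K) (i : Fin d) :
    ∫ x in K, x i = 0 := by
  have h := centroid_apply hK.1 i
  rw [hiso.1] at h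
  simpa [hK.volume_real_pos.ne'] using h

lemma IsIsotropic.setIntegral_coord_mul_coord (hiso : IsIsotropic K) (hK : IsConvexBody K)
    (i j : Fin d) :
    ∫ x in K, x i * x j = volume.real K * (1 : Matrix (Fin d) (Fin d) ℝ) i j := by
  have hvol := hK.volume_real_pos
  have h := covMatrix_apply hK i j
  rw [hiso.2, hiso.setIntegral_coord hK, zero_mul, zero_div, sub_zero] at h
  rw [h]
  field_simp

lemma IsIsotropic.setIntegral_norm_sq (hiso : IsIsotropic K) (hK : IsConvexBody K) :
    ∫ x in K, ‖x‖ ^ 2 = d * volume.real K := by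
  simp_rw [EuclideanSpace.real_norm_sq_eq, sq]
  rw [integral_finsetSum _ fun i _ => ContinuousOn.integrableOn_compact hK.1 (by fun_prop)]
  simp [hiso.setIntegral_coord_mul_coord hK]

end Moments

section FirstVariation

variable {d : ℕ}

/-- The quantity `det A(K) / vol(K) ^ 2 = L_K ^ (2 d)`. -/
def isoConstPow (K : Set (Euc d)) : ℝ := (covMatrix K).det / volume.real K ^ 2

lemma isoConst_lt_isoConst (hd : d ≠ 0) {K L : Set (Euc d)} (h0 : 0 ≤ isoConstPow K)
    (h : isoConstPow K < isoConstPow L) : isoConst K < isoConst L :=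
  Real.rpow_lt_rpow h0 h (by positivity)

lemma IsIsotropic.isoConstPow_eq {P : Set (Euc d)} (hiso : IsIsotropic P) :
    isoConstPow P = (volume.real P ^ 2)⁻¹ := by
  rw [isoConstPow, hiso.2, Matrix.det_one, one_div]

/-- `K` is a deformation of `P` through convex bodies, defined for small `t ≥ 0`, whose first
variation is the functional `δ`: the one-sided derivative of `∫ x in K t, φ x` at `t = 0` is
`δ φ`. -/
structure IsVariation (P : Set (Euc d)) (K : ℝ → Set (Euc d)) (δ : (Euc d → ℝ) → ℝ) : Prop where
  zero : K 0 = P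
  isConvexBody : ∀ᶠ t in 𝓝[≥] 0, IsConvexBody (K t)
  tendsto_hausdorffDist : Filter.Tendsto (fun t => Metric.hausdorffDist (K t) P) (𝓝[>] 0) (𝓝 0)
  hasDerivWithinAt : ∀ φ, Continuous φ →
    HasDerivWithinAt (fun t => ∫ x in K t, φ x) (δ φ) (Set.Ioi 0) 0

namespace IsVariation

variable {P : Set (Euc d)} {K : ℝ → Set (Euc d)} {δ : (Euc d → ℝ) → ℝ}

lemma isConvexBody_zero (h : IsVariation P K δ) : IsConvexBody P :=
  h.zero ▸ h.isConvexBody.self_of_nhdsWithin Set.self_mem_Ici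

lemma hasDerivWithinAt_volume (h : IsVariation P K δ) :
    HasDerivWithinAt (fun t => volume.real (K t)) (δ fun _ => 1) (Set.Ioi 0) 0 := by
  simpa using h.hasDerivWithinAt (fun _ => 1) continuous_const

lemma apply_norm_sq (h : IsVariation P K δ) :
    δ (fun x => ‖x‖ ^ 2) = ∑ i, δ fun x => x i * x i := by
  refine (uniqueDiffWithinAt_Ioi 0).eq_deriv _ (h.hasDerivWithinAt _ (by fun_prop)) ?_
  have hsum := HasDerivWithinAt.fun_sum fun i (_ : i ∈ univ) =>
    h.hasDerivWithinAt (fun x => x i * x i) (by fun_prop)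
  have heq {L : Set (Euc d)} (hL : IsConvexBody L) :
      ∫ x in L, ‖x‖ ^ 2 = ∑ i, ∫ x in L, x i * x i := by
    simp_rw [EuclideanSpace.real_norm_sq_eq, sq]
    exact integral_finsetSum _ fun i _ => ContinuousOn.integrableOn_compact hL.1 (by fun_prop)
  refine hsum.congr_of_eventuallyEq ?_ (heq (h.zero ▸ h.isConvexBody_zero))
  exact (h.isConvexBody.filter_mono (nhdsWithin_mono _ Set.Ioi_subset_Ici_self)).mono fun t => heq

lemma hasDerivWithinAt_covMatrix (h : IsVariation P K δ) (hiso : IsIsotropic P) (i j : Fin d) :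
    HasDerivWithinAt (fun t => covMatrix (K t) i j)
      (((δ fun x => x i * x j) - (1 : Matrix (Fin d) (Fin d) ℝ) i j * δ fun _ => 1) /
        volume.real P) (Set.Ioi 0) 0 := by
  have hP := h.isConvexBody_zero
  have hvol : volume.real (K 0) ≠ 0 := by rw [h.zero]; exact hP.volume_real_pos.ne'
  have hquot := ((h.hasDerivWithinAt (fun x => x i * x j) (by fun_prop)).fun_div
      h.hasDerivWithinAt_volume hvol).fun_sub
    (((h.hasDerivWithinAt (fun x => x i) (by fun_prop)).fun_mul
      (h.hasDerivWithinAt (fun x => x j) (by fun_prop))).fun_div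
        (h.hasDerivWithinAt_volume.fun_pow 2) (pow_ne_zero 2 hvol))
  refine (hquot.congr_of_eventuallyEq ?_
    (covMatrix_apply (h.zero ▸ h.isConvexBody_zero) i j)).congr_deriv ?_
  · filter_upwards [h.isConvexBody.filter_mono (nhdsWithin_mono _ Set.Ioi_subset_Ici_self)]
      with t ht using covMatrix_apply ht i j
  · rw [h.zero] at hvol ⊢
    rw [hiso.setIntegral_coord hP, hiso.setIntegral_coord hP, hiso.setIntegral_coord_mul_coord hP]
    field_simp
    ring

lemma hasDerivWithinAt_isoConstPow (h : IsVariation P K δ) (hiso : IsIsotropic P) :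
    HasDerivWithinAt (fun t => isoConstPow (K t))
      ((δ (fun x => ‖x‖ ^ 2) - (d + 2) * δ fun _ => 1) / volume.real P ^ 3) (Set.Ioi 0) 0 := by
  have hvol := h.isConvexBody_zero.volume_real_pos
  have hdet := hasDerivWithinAt_det_of_eq_one
    (A' := Matrix.of fun i j => ((δ fun x => x i * x j) -
      (1 : Matrix (Fin d) (Fin d) ℝ) i j * δ fun _ => 1) / volume.real P)
    (h.hasDerivWithinAt_covMatrix hiso) (by rw [h.zero, hiso.2])
  refine (hdet.fun_div (h.hasDerivWithinAt_volume.fun_pow 2) ?_).congr_deriv ?_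
  · rw [h.zero]; positivity
  · rw [h.zero, hiso.2, Matrix.det_one, h.apply_norm_sq]
    simp only [Matrix.trace, Matrix.diag_apply, Matrix.of_apply, Matrix.one_apply_eq, one_mul,
      ← sum_div, sum_sub_distrib, sum_const, card_univ, Fintype.card_fin, nsmul_eq_mul]
    field_simp
    ring

end IsVariation

lemma IsLocalExtremumOfIsoConst.exists_isLocalMaxOn {P : Set (Euc d)} (hd : d ≠ 0)
    (hiso : IsIsotropic P) (hext : IsLocalExtremumOfIsoConst P) :
    ∃ σ : ℝ, σ ≠ 0 ∧ ∀ K δ, IsVariation P K δ →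
      IsLocalMaxOn (fun t => σ * isoConstPow (K t)) (Set.Ioi 0) 0 := by
  have hP : 0 ≤ isoConstPow P := by rw [hiso.isoConstPow_eq]; positivity
  rcases hext with ⟨ε, hε, hmax⟩ | ⟨ε, hε, hmin⟩
  · refine ⟨1, one_ne_zero, fun K δ h => ?_⟩
    filter_upwards [h.isConvexBody.filter_mono (nhdsWithin_mono _ Set.Ioi_subset_Ici_self),
      h.tendsto_hausdorffDist.eventually_lt_const hε] with t ht hdist
    rw [h.zero, one_mul, one_mul]
    exact not_lt.1 fun hlt => (hmax _ ht hdist).not_gt (isoConst_lt_isoConst hd hP hlt)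
  · refine ⟨-1, by norm_num, fun K δ h => ?_⟩
    have hpos : 0 < isoConstPow (K 0) := by
      have := h.isConvexBody_zero.volume_real_pos
      rw [h.zero, hiso.isoConstPow_eq]
      positivity
    filter_upwards [h.isConvexBody.filter_mono (nhdsWithin_mono _ Set.Ioi_subset_Ici_self),
      h.tendsto_hausdorffDist.eventually_lt_const hε,
      (h.hasDerivWithinAt_isoConstPow hiso).continuousWithinAt.eventually_const_lt hpos]
      with t ht hdist htpos
    rw [h.zero, neg_one_mul, neg_one_mul, neg_le_neg_iff]
    exact not_lt.1 fun hlt => (hmin _ ht hdist).not_gt (isoConst_lt_isoConst hd htpos.le hlt)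

lemma IsLocalExtremumOfIsoConst.exists_mul_variation_nonpos {P : Set (Euc d)} (hd : d ≠ 0)
    (hiso : IsIsotropic P) (hext : IsLocalExtremumOfIsoConst P) :
    ∃ σ : ℝ, σ ≠ 0 ∧ ∀ K δ, IsVariation P K δ →
      σ * (δ (fun x => ‖x‖ ^ 2) - (d + 2) * δ fun _ => 1) ≤ 0 := by
  obtain ⟨σ, hσ, hmax⟩ := hext.exists_isLocalMaxOn hd hiso
  refine ⟨σ, hσ, fun K δ h => ?_⟩
  have hvol := h.isConvexBody_zero.volume_real_pos
  have hle := hasDerivWithinAt_Ioi_nonpos_of_isLocalMaxOn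
    ((h.hasDerivWithinAt_isoConstPow hiso).const_mul σ) (hmax K δ h)
  rw [mul_div_assoc'] at hle
  exact nonpos_of_mul_nonpos_left (by rwa [div_eq_mul_inv] at hle) (by positivity)

end FirstVariation

section BasisCoordinates

variable {E ν : Type*} [AddCommGroup E] [Module ℝ E] [Fintype ν] (b : Module.Basis ν ℝ E)

lemma sumCoords_eq_sum_coord (x : E) : b.sumCoords x = ∑ j, b.coord j x := by
  simp

lemma sum_coord_smul_basis (x : E) : ∑ j, b.coord j x • b j = x := b.sum_repr x

lemma linearMap_apply_eq_sum_coord_mul (f : E →ₗ[ℝ] ℝ) (x : E) :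
    f x = ∑ j, b.coord j x * f (b j) := by
  conv_lhs => rw [← sum_coord_smul_basis b x]
  simp only [map_sum, map_smul, smul_eq_mul]

variable {b}

omit [Fintype ν] in
lemma range_basis_eq_insert (j : ν) : Set.range b = insert (b j) (b '' {j}ᶜ) := by
  rw [← Set.image_insert_eq, Set.insert_eq, Set.union_compl_self, Set.image_univ]

omit [Fintype ν] in
lemma range_basis_eq_of_subset [Finite ν] {b' : Module.Basis ν ℝ E}
    (h : Set.range b ⊆ Set.range b') : Set.range b = Set.range b' := by
  refine Set.eq_of_subset_of_ncard_le h ?_ (Set.finite_range _)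
  rw [Set.ncard_range_of_injective b.injective, Set.ncard_range_of_injective b'.injective]

lemma sum_basis_eq_add_finsum {v : E} {R : Set E} (hv : v ∉ R)
    (h : Set.range b = insert v R) : ∑ j, b j = v + ∑ᶠ x ∈ R, x := by
  have hR : R.Finite := (Set.finite_range b).subset (h ▸ Set.subset_insert v R)
  rw [← finsum_eq_sum_of_fintype, ← finsum_mem_range b.injective (f := fun x => x), h,
    finsum_mem_insert _ hv hR]

omit [Fintype ν] in
lemma basis_notMem_image_compl_singleton (j : ν) : b j ∉ b '' {j}ᶜ := by
  simp [b.injective.eq_iff]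

end BasisCoordinates

section Cone

variable {E ν : Type*} [AddCommGroup E] [Module ℝ E] (b : Module.Basis ν ℝ E)

/-- The affine basis formed by the origin and the vectors of a linear basis. Its convex hull is the
cone with apex `0` over the simplex spanned by the linear basis. -/
def coneBasis : AffineBasis (Option ν) ℝ E where
  toFun o := o.elim 0 b
  ind' := by
    rw [affineIndependent_iff_linearIndependent_vsub ℝ _ none]
    have hinj : Function.Injective fun o : {o : Option ν // o ≠ none} =>
        o.1.get (Option.ne_none_iff_isSome.1 o.2) := fun o o' h =>
      Subtype.ext (Option.get_inj.1 h)
    have heq : (fun o : {o : Option ν // o ≠ none} => o.1.elim 0 b -ᵥ (none : Option ν).elim 0 b) =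
        b ∘ fun o => o.1.get (Option.ne_none_iff_isSome.1 o.2) := by
      ext ⟨_ | j, ho⟩
      · exact absurd rfl ho
      · simp
    rw [heq]
    exact b.linearIndependent.comp _ hinj
  tot' := by
    have hrange : (Set.range fun o : Option ν => o.elim 0 b) = insert 0 (Set.range b) :=
      Option.range_eq _
    rw [hrange, ← AffineSubspace.coe_eq_univ_iff, affineSpan_insert_zero, b.span_eq,
      Submodule.top_coe]

@[simp]
lemma coneBasis_none : coneBasis b none = 0 := rfl

@[simp]
lemma coneBasis_some (j : ν) : coneBasis b (some j) = b j := rfl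

lemma range_coneBasis : Set.range (coneBasis b) = insert 0 (Set.range b) := by
  rw [Option.range_eq]
  rfl

lemma coneBasis_coord_none :
    (coneBasis b).coord none = AffineMap.const ℝ E 1 - b.sumCoords.toAffineMap := by
  classical
  refine AffineMap.ext_on (coneBasis b).tot ?_
  rintro _ ⟨_ | j, rfl⟩ <;> rw [AffineBasis.coord_apply] <;> simp

lemma coneBasis_coord_some (j : ν) : (coneBasis b).coord (some j) = (b.coord j).toAffineMap := by
  classical
  refine AffineMap.ext_on (coneBasis b).tot ?_
  rintro _ ⟨_ | m, rfl⟩ <;> rw [AffineBasis.coord_apply] <;> simp [Finsupp.single_apply, eq_comm]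

lemma mem_convexHull_range_coneBasis {x : E} : x ∈ convexHull ℝ (Set.range (coneBasis b)) ↔
    (∀ j, 0 ≤ b.coord j x) ∧ b.sumCoords x ≤ 1 := by
  simp [(coneBasis b).convexHull_eq_nonneg_coord, Option.forall, coneBasis_coord_none,
    coneBasis_coord_some, and_comm]

/-- The affine map fixing the vectors of a basis and moving the origin to `p`. -/
def coneMap (p : E) : E →ᵃ[ℝ] E := affineShear ((coneBasis b).coord none) p

lemma coneMap_apply (p x : E) : coneMap b p x = x + (1 - b.sumCoords x) • p := by
  simp [coneMap, coneBasis_coord_none]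

lemma image_coneMap (p : E) :
    coneMap b p '' convexHull ℝ (Set.range (coneBasis b)) =
      convexHull ℝ (insert p (Set.range b)) := by
  have hfix : coneMap b p '' Set.range b = Set.range b := by
    rw [← Set.range_comp]
    congr 1
    ext j
    simp [coneMap_apply]
  rw [AffineMap.image_convexHull, range_coneBasis, Set.image_insert_eq, hfix]
  simp [coneMap_apply]

lemma mem_convexHull_range_basis [Finite ν] {x : E} : x ∈ convexHull ℝ (Set.range b) ↔
    (∀ j, 0 ≤ b.coord j x) ∧ b.sumCoords x = 1 := by
  constructor
  · have hconv : Convex ℝ {x : E | (∀ j, 0 ≤ b.coord j x) ∧ b.sumCoords x = 1} := by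
      simp only [Set.ofPred_and, Set.ofPred_forall]
      exact (convex_iInter fun j => convex_halfSpace_ge (b.coord j).isLinear 0).inter
        (convex_hyperplane b.sumCoords.isLinear 1)
    refine fun hx => convexHull_min ?_ hconv hx
    rintro _ ⟨m, rfl⟩
    classical
    refine ⟨fun j => ?_, b.sumCoords_self_apply m⟩
    rw [b.coord_apply, b.repr_self, Finsupp.single_apply]
    positivity
  · have := Fintype.ofFinite ν
    rintro ⟨hpos, hsum⟩
    rw [sumCoords_eq_sum_coord] at hsum
    exact mem_convexHull_of_exists_fintype (fun j => b.coord j x) b hpos hsum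
      Set.mem_range_self (sum_coord_smul_basis b x)

lemma coneMap_eq_sum [Fintype ν] (p x : E) :
    coneMap b p x = ∑ o, (coneBasis b).coord o x • (o.elim p b : E) := by
  simp [Fintype.sum_option, coneMap_apply, coneBasis_coord_none, coneBasis_coord_some, b.sum_repr,
    add_comm]

end Cone

section ConeIntegral

variable {E ν : Type*} [NormedAddCommGroup E] [NormedSpace ℝ E] [FiniteDimensional ℝ E]
  (b : Module.Basis ν ℝ E)

variable [Finite ν] [MeasurableSpace E] [BorelSpace E] (μ : Measure E) [μ.IsAddHaarMeasure]

lemma continuous_setIntegral_coneMap {φ : E → ℝ} (hφ : Continuous φ) :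
    Continuous fun p => ∫ x in convexHull ℝ (Set.range (coneBasis b)), φ (coneMap b p x) ∂μ := by
  have hs : Continuous b.sumCoords := LinearMap.continuous_of_finiteDimensional _
  refine continuous_parametric_integral_of_continuous (f := fun p x => φ (coneMap b p x)) ?_
    (isCompact_convexHull_range_affineBasis _)
  simp only [Function.uncurry_def, coneMap_apply]
  fun_prop

lemma setIntegral_convexHull_insert_range {p : E} (hp : b.sumCoords p ≠ 1) (φ : E → ℝ) :
    ∫ x in convexHull ℝ (insert p (Set.range b)), φ x ∂μ = |1 - b.sumCoords p| *
      ∫ x in convexHull ℝ (Set.range (coneBasis b)), φ (coneMap b p x) ∂μ := by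
  have hlin : 1 + ((coneBasis b).coord none).linear p = 1 - b.sumCoords p := by
    simp [coneBasis_coord_none, sub_eq_add_neg]
  rw [← image_coneMap, coneMap, setIntegral_image_affineShear μ _
    (isCompact_convexHull_range_affineBasis _).measurableSet, hlin]
  rwa [hlin, sub_ne_zero, ne_comm]

end ConeIntegral

lemma setIntegral_norm_sq_coneMap {E ν : Type*} [NormedAddCommGroup E] [InnerProductSpace ℝ E]
    [FiniteDimensional ℝ E] [MeasurableSpace E] [BorelSpace E] [Fintype ν]
    (b : Module.Basis ν ℝ E) (μ : Measure E) [μ.IsAddHaarMeasure] (p : E) :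
    ∫ x in convexHull ℝ (Set.range (coneBasis b)), ‖coneMap b p x‖ ^ 2 ∂μ =
      μ.real (convexHull ℝ (Set.range (coneBasis b))) /
        ((Fintype.card ν + 1) * (Fintype.card ν + 2)) *
        (‖p + ∑ j, b j‖ ^ 2 + (‖p‖ ^ 2 + ∑ j, ‖b j‖ ^ 2)) := by
  simp_rw [coneMap_eq_sum]
  rw [setIntegral_norm_sq_sum_coord_smul, Fintype.card_option, Fintype.sum_option,
    Fintype.sum_option]
  push_cast
  ring_nf
  rfl

section Reflection

variable {E ν : Type*} [NormedAddCommGroup E] [InnerProductSpace ℝ E] [FiniteDimensional ℝ E]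
  [Finite ν] {b : Module.Basis ν ℝ E} {j : ν}

omit [FiniteDimensional ℝ E] in
lemma span_image_compl_singleton_eq_orthogonal {w : E} (hperp : ∀ m ≠ j, ⟪b m, w⟫ = 0)
    (hw : ⟪b j, w⟫ ≠ 0) : Submodule.span ℝ (b '' {j}ᶜ) = (ℝ ∙ w)ᗮ := by
  ext x
  have hinner : ⟪x, w⟫ = b.coord j x * ⟪b j, w⟫ := by
    have := Fintype.ofFinite ν
    conv_lhs => rw [← sum_coord_smul_basis b x]
    simp_rw [sum_inner, real_inner_smul_left]
    refine Fintype.sum_eq_single j fun m hm => ?_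
    rw [hperp m hm, mul_zero]
  rw [Submodule.mem_orthogonal_singleton_iff_inner_left, hinner, mul_eq_zero, or_iff_left hw,
    b.mem_span_image, Set.subset_compl_singleton_iff, mem_coe, Finsupp.notMem_support_iff,
    b.coord_apply]

lemma reflection_basis_eq {v : E} (hperp : ∀ m ≠ j, ⟪b m, b j - v⟫ = 0) (hnorm : ‖b j‖ = ‖v‖)
    (hne : b j ≠ v) : (Submodule.span ℝ (b '' {j}ᶜ)).reflection (b j) = v := by
  have hw : ⟪b j, b j - v⟫ ≠ 0 := by
    have hmid : ⟪b j + v, b j - v⟫ = 0 := (real_inner_add_sub_eq_zero_iff _ _).2 hnorm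
    have hpos : 0 < ⟪b j - v, b j - v⟫ := real_inner_self_pos.2 (sub_ne_zero.2 hne)
    rw [inner_add_left] at hmid
    rw [inner_sub_left] at hpos
    exact ne_of_gt (by linarith)
  rw [span_image_compl_singleton_eq_orthogonal hperp hw]
  exact Submodule.reflection_sub hnorm

end Reflection

/-- `P` is the union of the simplices spanned by the origin and the bases `B i`, whose images are
the vertex sets of the facets of `P`; the facet with vertex set `B i` lies in the hyperplane where
the coordinates with respect to `B i` sum to `1`. This encodes a simplicial polytope containing the
origin in its interior through its facets. -/
structure IsFacetSystem {E ι ν : Type*} [AddCommGroup E] [Module ℝ E] (P : Set E)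
    (B : ι → Module.Basis ν ℝ E) : Prop where
  cover : ∀ x, ∃ i, ∀ j, 0 ≤ (B i).coord j x
  mem_iff : ∀ x, x ∈ P ↔ ∀ i, (B i).sumCoords x ≤ 1
  basis_mem : ∀ i j, B i j ∈ P
  face : ∀ i k m, (B i).sumCoords (B k m) = 1 → B k m ∈ Set.range (B i)
  inj : ∀ i k, Set.range (B i) = Set.range (B k) → i = k

namespace IsFacetSystem

section Combinatorics

variable {E ι ν : Type*} [AddCommGroup E] [Module ℝ E] {P : Set E}
  {B : ι → Module.Basis ν ℝ E}

lemma sumCoords_basis_le (hB : IsFacetSystem P B) (i k : ι) (j : ν) :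
    (B k).sumCoords (B i j) ≤ 1 :=
  (hB.mem_iff _).1 (hB.basis_mem i j) k

/-- Facets sharing all vertices but the `j`-th vertex of the first one. -/
def Adj (B : ι → Module.Basis ν ℝ E) (i k : ι) (j : ν) : Prop :=
  i ≠ k ∧ ∀ m, m ≠ j → B i m ∈ Set.range (B k)

lemma sumCoords_eq_one_of_mem_range {i : ι} {x : E} (hx : x ∈ Set.range (B i)) :
    (B i).sumCoords x = 1 := by
  obtain ⟨j, rfl⟩ := hx
  exact (B i).sumCoords_self_apply j

variable [Finite ν]

lemma sumCoords_le (hB : IsFacetSystem P B) {i : ι} {x : E} (hx : ∀ j, 0 ≤ (B i).coord j x)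
    (k : ι) : (B k).sumCoords x ≤ (B i).sumCoords x := by
  have := Fintype.ofFinite ν
  rw [linearMap_apply_eq_sum_coord_mul (B i) (B k).sumCoords, sumCoords_eq_sum_coord (B i)]
  exact sum_le_sum fun j _ => mul_le_of_le_one_right (hx j) (hB.sumCoords_basis_le i k j)

lemma basis_mem_range (hB : IsFacetSystem P B) {i k : ι} {x : E}
    (hx : ∀ j, 0 ≤ (B i).coord j x) (hk : (B i).sumCoords x ≤ (B k).sumCoords x) {j : ν}
    (hj : 0 < (B i).coord j x) : B i j ∈ Set.range (B k) := by
  have := Fintype.ofFinite ν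
  have hle := hB.sumCoords_basis_le i k
  refine hB.face k i j ((hle j).eq_of_not_lt fun hlt => hk.not_gt ?_)
  rw [linearMap_apply_eq_sum_coord_mul (B i) (B k).sumCoords, sumCoords_eq_sum_coord (B i)]
  exact sum_lt_sum (fun m _ => mul_le_of_le_one_right (hx m) (hle m))
    ⟨j, mem_univ j, mul_lt_of_lt_one_right hj hlt⟩

lemma eq_of_forall_pos (hB : IsFacetSystem P B) {i k : ι} {x : E}
    (hx : ∀ j, 0 < (B i).coord j x) (hk : (B i).sumCoords x ≤ (B k).sumCoords x) : i = k := by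
  refine hB.inj i k (range_basis_eq_of_subset ?_)
  rintro _ ⟨j, rfl⟩
  exact hB.basis_mem_range (fun j => (hx j).le) hk (hx j)

lemma basis_notMem_range_of_adj (hB : IsFacetSystem P B) {i k : ι} {j : ν} (h : Adj B i k j) :
    B i j ∉ Set.range (B k) := by
  intro hj
  refine h.1 (hB.inj i k (range_basis_eq_of_subset ?_))
  rintro _ ⟨m, rfl⟩
  rcases eq_or_ne m j with rfl | hm
  exacts [hj, h.2 m hm]

lemma exists_range_eq_insert_of_adj {i k : ι} {j : ν} (h : Adj B i k j) :
    ∃ v, v ∉ B i '' {j}ᶜ ∧ Set.range (B k) = insert v (B i '' {j}ᶜ) := by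
  have hfin : (B i '' {j}ᶜ).Finite := Set.toFinite _
  have hcard : (B i '' {j}ᶜ).ncard + 1 = (Set.range (B k)).ncard := by
    rw [← Set.ncard_insert_of_notMem (basis_notMem_image_compl_singleton j) hfin,
      ← range_basis_eq_insert, Set.ncard_range_of_injective (B i).injective,
      Set.ncard_range_of_injective (B k).injective]
  obtain ⟨v, hv, hrange⟩ :=
    (Set.exists_eq_insert_iff_ncard hfin).2 ⟨fun _ ⟨m, hm, hmx⟩ => hmx ▸ h.2 m hm, hcard⟩
  exact ⟨v, hv, hrange.symm⟩

/-- The pivot step of the simplex method: crossing a ridge towards `y` increases the value at `y` of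
the functional defining the facet. -/
lemma sumCoords_lt_of_adj (hB : IsFacetSystem P B) {i k : ι} {j : ν} (h : Adj B i k j) {y : E}
    (hy : (B i).coord j y < 0) : (B i).sumCoords y < (B k).sumCoords y := by
  have := Fintype.ofFinite ν
  have hlt : (B k).sumCoords (B i j) < 1 := (hB.sumCoords_basis_le i k j).lt_of_ne fun heq =>
    hB.basis_notMem_range_of_adj h (hB.face k i j heq)
  rw [linearMap_apply_eq_sum_coord_mul (B i) (B k).sumCoords, sumCoords_eq_sum_coord (B i)]
  refine sum_lt_sum (fun m _ => ?_) ⟨j, mem_univ j, lt_mul_of_lt_one_right hy hlt⟩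
  rcases eq_or_ne m j with rfl | hm
  · exact le_mul_of_le_one_right hy.le hlt.le
  · rw [sumCoords_eq_one_of_mem_range (h.2 m hm), mul_one]

variable [Finite ι]

lemma exists_adj (hB : IsFacetSystem P B) (i : ι) (j : ν) : ∃ k, Adj B i k j := by
  classical
  have := Fintype.ofFinite ν
  set r := ∑ m ∈ univ.erase j, B i m with hr
  have hcoord (m : ν) : (B i).coord m r = if m = j then 0 else 1 := by
    by_cases hm : m = j <;> simp [hr, Finsupp.single_apply, hm]
  obtain ⟨k, hk⟩ : ∃ k, ∃ᶠ ε : ℝ in 𝓝[>] 0, ∀ m, 0 ≤ (B k).coord m (r - ε • B i j) := by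
    by_contra! h
    obtain ⟨ε, hε⟩ := (Filter.eventually_all.2 h).exists
    obtain ⟨k, hk⟩ := hB.cover (r - ε • B i j)
    obtain ⟨m, hm⟩ := hε k
    exact hm.not_ge (hk m)
  have hrk (m : ν) : 0 ≤ (B k).coord m r := by
    have hlim : Filter.Tendsto (fun ε : ℝ => (B k).coord m (r - ε • B i j)) (𝓝[>] 0)
        (𝓝 ((B k).coord m r)) := by
      simp only [map_sub, map_smul, smul_eq_mul]
      exact (Continuous.tendsto' (by fun_prop) _ _ (by simp)).mono_left nhdsWithin_le_nhds
    exact isClosed_Ici.mem_of_frequently_of_tendsto (hk.mono fun ε hε => hε m) hlim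
  refine ⟨k, ?_, fun m hm => ?_⟩
  · rintro rfl
    obtain ⟨ε, hε, hε0⟩ := (hk.and_eventually self_mem_nhdsWithin).exists
    have hneg := hε j
    rw [map_sub, map_smul, hcoord, if_pos rfl, Module.Basis.coord_apply, (B i).repr_self,
      Finsupp.single_eq_same, smul_eq_mul, mul_one, zero_sub, neg_nonneg] at hneg
    exact hneg.not_gt hε0
  · refine hB.basis_mem_range (x := r) (fun m => ?_) (hB.sumCoords_le hrk i) ?_
    · rw [hcoord]; split_ifs <;> norm_num
    · rw [hcoord, if_neg hm]; norm_num

lemma induction_adj (hB : IsFacetSystem P B) {G : ι → Prop} {i₀ : ι} (h₀ : G i₀)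
    (hstep : ∀ i k j, G i → Adj B i k j → G k) (k₀ : ι) : G k₀ := by
  have := Fintype.ofFinite ν
  set y := ∑ j, B k₀ j with hy
  have hyk (j : ν) : 0 < (B k₀).coord j y := by
    classical simp [hy, Finsupp.single_apply]
  obtain ⟨i, hi, hmax⟩ := (Set.toFinite {i | G i}).exists_maximalFor
    (fun i => (B i).sumCoords y) _ ⟨i₀, h₀⟩
  by_cases hpos : ∀ j, 0 ≤ (B i).coord j y
  · rwa [hB.eq_of_forall_pos hyk (hB.sumCoords_le hpos k₀)]
  · push Not at hpos
    obtain ⟨j, hj⟩ := hpos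
    obtain ⟨k, hk⟩ := hB.exists_adj i j
    have hlt := hB.sumCoords_lt_of_adj hk hj
    exact absurd (hmax (hstep i k j hi hk) hlt.le) hlt.not_ge

end Combinatorics

section Symmetry

variable {E ι ν : Type*} [NormedAddCommGroup E] [InnerProductSpace ℝ E] [FiniteDimensional ℝ E]
  [Fintype ν] {P : Set E} {B : ι → Module.Basis ν ℝ E} {c : ℝ}

/-- With `s` the sum of the vertices of the common ridge and `u`, `v` the remaining vertices of the
two facets, subtracting the hypothesis for the two facets gives `u - v ⟂ x` for all `x` in the
ridge, hence `u - v ⟂ s`, and then `‖u‖ = ‖v‖`. -/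
lemma reflection_image_range_of_adj (hB : IsFacetSystem P B)
    (hc : ∀ i j, ⟪B i j, B i j + ∑ m, B i m⟫ = c) {i k : ι} {j : ν} (h : Adj B i k j) :
    (Submodule.span ℝ (B i '' {j}ᶜ)).reflection '' Set.range (B i) = Set.range (B k) := by
  obtain ⟨v, hvR, hrange⟩ := exists_range_eq_insert_of_adj h
  set R := B i '' {j}ᶜ
  set s := ∑ᶠ x ∈ R, x
  have hcrit_i {x : E} (hx : x ∈ Set.range (B i)) : ⟪x, x + (B i j + s)⟫ = c := by
    obtain ⟨m, rfl⟩ := hx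
    rw [← sum_basis_eq_add_finsum (basis_notMem_image_compl_singleton j)
      (range_basis_eq_insert j), hc]
  have hcrit_k {x : E} (hx : x ∈ Set.range (B k)) : ⟪x, x + (v + s)⟫ = c := by
    obtain ⟨m, rfl⟩ := hx
    rw [← sum_basis_eq_add_finsum hvR hrange, hc]
  have hperp {x : E} (hx : x ∈ R) : ⟪x, B i j - v⟫ = 0 := by
    have h₁ := hcrit_i (Set.image_subset_range _ _ hx)
    have h₂ := hcrit_k (hrange ▸ Set.mem_insert_of_mem v hx)
    rw [inner_add_right, inner_add_right] at h₁ h₂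
    rw [inner_sub_right]
    linarith
  have hs : ⟪s, B i j - v⟫ = 0 :=
    finsum_mem_induction (p := fun x => ⟪x, B i j - v⟫ = 0) (inner_zero_left _)
      (fun x y hx hy => by rw [inner_add_left, hx, hy, add_zero]) fun x hx => hperp hx
  have hnorm : ‖B i j‖ = ‖v‖ := by
    have h₁ := hcrit_i (Set.mem_range_self j)
    have h₂ := hcrit_k (hrange ▸ Set.mem_insert v R)
    rw [inner_add_right, inner_add_right, real_inner_self_eq_norm_sq] at h₁ h₂
    rw [real_inner_comm, inner_sub_left] at hs
    exact (sq_eq_sq₀ (norm_nonneg _) (norm_nonneg _)).1 (by linarith)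
  have hne : B i j ≠ v := fun heq =>
    hB.basis_notMem_range_of_adj h (hrange ▸ heq ▸ Set.mem_insert (B i j) R)
  have hfix : (Submodule.span ℝ R).reflection '' R = R := by
    refine (Set.image_congr fun x hx => ?_).trans (Set.image_id R)
    exact Submodule.reflection_mem_subspace_eq_self (Submodule.subset_span hx)
  rw [range_basis_eq_insert j, Set.image_insert_eq, hrange, hfix,
    reflection_basis_eq (fun m hm => hperp ⟨m, hm, rfl⟩) hnorm hne]

omit [FiniteDimensional ℝ E] [Fintype ν] in
lemma image_subset [Finite ν] (hB : IsFacetSystem P B) {φ : E →ₗ[ℝ] E}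
    (h : ∀ i, ∃ k, φ '' Set.range (B i) = Set.range (B k)) : φ '' P ⊆ P := by
  have := Fintype.ofFinite ν
  rintro _ ⟨x, hx, rfl⟩
  obtain ⟨i, hi⟩ := hB.cover x
  obtain ⟨k, hk⟩ := h i
  refine (hB.mem_iff _).2 fun l => le_trans ?_ ((hB.mem_iff x).1 hx i)
  rw [← LinearMap.comp_apply, linearMap_apply_eq_sum_coord_mul (B i), sumCoords_eq_sum_coord (B i)]
  refine sum_le_sum fun j _ => mul_le_of_le_one_right (hi j) ?_
  obtain ⟨m, hm⟩ : φ (B i j) ∈ Set.range (B k) :=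
    hk ▸ Set.mem_image_of_mem φ (Set.mem_range_self j)
  rw [LinearMap.comp_apply, ← hm]
  exact hB.sumCoords_basis_le k l m

variable [Finite ι]

/-- Each neighbour of a facet is its mirror image in a linear subspace, and isometries intertwine
these reflections. -/
lemma exists_image_range_eq_of_adj (hB : IsFacetSystem P B)
    (hc : ∀ i j, ⟪B i j, B i j + ∑ m, B i m⟫ = c) (φ : E ≃ₗᵢ[ℝ] E) {i i' k : ι} {j : ν}
    (hk : φ '' Set.range (B i) = Set.range (B k)) (h : Adj B i i' j) :
    ∃ k', φ '' Set.range (B i') = Set.range (B k') := by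
  obtain ⟨j', hj'⟩ : φ (B i j) ∈ Set.range (B k) :=
    hk ▸ Set.mem_image_of_mem φ (Set.mem_range_self j)
  obtain ⟨k', hk'⟩ := hB.exists_adj k j'
  have hridge : φ '' (B i '' {j}ᶜ) = B k '' {j'}ᶜ := by
    rw [Set.image_compl_eq_range_sdiff_image (B i).injective, Set.image_sdiff φ.injective, hk,
      Set.image_compl_eq_range_sdiff_image (B k).injective, Set.image_singleton,
      Set.image_singleton, Set.image_singleton, hj']
  have hspan : Submodule.span ℝ (B k '' {j'}ᶜ) =
      (Submodule.span ℝ (B i '' {j}ᶜ)).map (φ.toLinearEquiv : E →ₗ[ℝ] E) := by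
    rw [Submodule.map_span, ← hridge]
    rfl
  refine ⟨k', ?_⟩
  rw [← hB.reflection_image_range_of_adj hc h, ← hB.reflection_image_range_of_adj hc hk', ← hk]
  simp_rw [Set.image_image, hspan]
  refine Set.image_congr fun x _ => ?_
  rw [Submodule.reflection_map_apply, φ.symm_apply_apply]

lemma exists_isometry_of_adj (hB : IsFacetSystem P B)
    (hc : ∀ i j, ⟪B i j, B i j + ∑ m, B i m⟫ = c) {i k : ι} {j : ν} (h : Adj B i k j) :
    ∃ φ : E ≃ₗᵢ[ℝ] E, φ '' P = P ∧ φ '' Set.range (B i) = Set.range (B k) := by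
  set φ := (Submodule.span ℝ (B i '' {j}ᶜ)).reflection
  have hφ : φ '' Set.range (B i) = Set.range (B k) := hB.reflection_image_range_of_adj hc h
  have hsub : φ '' P ⊆ P := hB.image_subset (φ := φ.toLinearEquiv.toLinearMap) <|
    hB.induction_adj ⟨k, hφ⟩ fun i i' j ⟨_, hi⟩ hadj =>
      hB.exists_image_range_eq_of_adj hc φ hi hadj
  refine ⟨φ, hsub.antisymm fun x hx => ⟨φ x, hsub ⟨x, hx, rfl⟩, ?_⟩, hφ⟩
  exact Submodule.reflection_reflection _ x

lemma exists_isometry (hB : IsFacetSystem P B)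
    (hc : ∀ i j, ⟪B i j, B i j + ∑ m, B i m⟫ = c) (i k : ι) :
    ∃ φ : E ≃ₗᵢ[ℝ] E, φ '' P = P ∧ φ '' Set.range (B i) = Set.range (B k) := by
  refine hB.induction_adj (G := fun k => ∃ φ : E ≃ₗᵢ[ℝ] E, φ '' P = P ∧
    φ '' Set.range (B i) = Set.range (B k)) (i₀ := i) ⟨.refl ℝ _, by simp, by simp⟩ ?_ k
  rintro k k' j ⟨φ, hφP, hφ⟩ hadj
  obtain ⟨ψ, hψP, hψ⟩ := hB.exists_isometry_of_adj hc hadj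
  refine ⟨φ.trans ψ, ?_, ?_⟩
  · rw [LinearIsometryEquiv.coe_trans, Set.image_comp, hφP, hψP]
  · rw [LinearIsometryEquiv.coe_trans, Set.image_comp, hφ, hψ]

end Symmetry
end IsFacetSystem

lemma hasDerivAt_mul_of_continuousAt_zero {g : ℝ → ℝ} (hg : ContinuousAt g 0) :
    HasDerivAt (fun t => t * g t) (g 0) 0 := by
  rw [hasDerivAt_iff_tendsto_slope_zero]
  refine (hg.tendsto.mono_left nhdsWithin_le_nhds).congr' ?_
  filter_upwards [self_mem_nhdsWithin] with t ht
  simp [inv_mul_cancel_left₀ (show t ≠ 0 from ht)]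

lemma convexHull_insert_eq_self_of_mem {E : Type*} [AddCommGroup E] [Module ℝ E] {P : Set E}
    (hP : Convex ℝ P) {q : E} (hq : q ∈ P) : convexHull ℝ (insert q P) = P := by
  rw [Set.insert_eq_of_mem hq, hP.convexHull_eq]

lemma hausdorffDist_convexHull_insert_le {E : Type*} [NormedAddCommGroup E] [NormedSpace ℝ E]
    {P : Set E} (hP : Convex ℝ P) {p q : E} (hq : q ∈ P) :
    Metric.hausdorffDist (convexHull ℝ (insert p P)) P ≤ dist p q := by
  refine Metric.hausdorffDist_le_of_mem_dist dist_nonneg ?_ fun x hx =>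
    ⟨x, subset_convexHull ℝ _ (Set.mem_insert_of_mem p hx), by simp⟩
  intro x hx
  rw [convexHull_insert ⟨q, hq⟩, hP.convexHull_eq, convexJoin_singleton_left, Set.mem_iUnion₂] at hx
  obtain ⟨y, hy, a, c, ha, hc, hac, rfl⟩ := hx
  refine ⟨a • q + c • y, hP hq hy ha hc hac, ?_⟩
  rw [dist_add_right, dist_smul₀, Real.norm_of_nonneg ha]
  exact mul_le_of_le_one_left dist_nonneg (by linarith)

namespace IsFacetSystem

section ConvexHull

variable {E ι ν : Type*} [AddCommGroup E] [Module ℝ E] {P : Set E}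
  {B : ι → Module.Basis ν ℝ E}

lemma zero_mem (hB : IsFacetSystem P B) : 0 ∈ P :=
  (hB.mem_iff 0).2 fun i => by simp

lemma convex (hB : IsFacetSystem P B) : Convex ℝ P := by
  have hP : P = ⋂ i, {x | (B i).sumCoords x ≤ 1} := by
    ext x
    simp only [hB.mem_iff, Set.mem_iInter, Set.mem_ofPred_eq]
  rw [hP]
  exact convex_iInter fun i => convex_halfSpace_le (B i).sumCoords.isLinear 1

variable [Finite ν]

lemma mem_convexHull_range_of_sumCoords_eq_one (hB : IsFacetSystem P B) {i : ι} {x : E} (hx : x ∈ P)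
    (hi : (B i).sumCoords x = 1) : x ∈ convexHull ℝ (Set.range (B i)) := by
  have := Fintype.ofFinite ν
  obtain ⟨k, hk⟩ := hB.cover x
  refine (mem_convexHull_range_basis (B i)).2 ⟨fun j => ?_, hi⟩
  rw [linearMap_apply_eq_sum_coord_mul (B k) ((B i).coord j)]
  refine sum_nonneg fun m _ => ?_
  obtain h0 | hpos := (hk m).eq_or_lt
  · rw [← h0, zero_mul]
  · obtain ⟨l, hl⟩ := hB.basis_mem_range hk (hi ▸ (hB.mem_iff x).1 hx k) hpos
    rw [← hl]
    exact mul_nonneg hpos.le (((mem_convexHull_range_basis (B i)).1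
      (subset_convexHull ℝ _ (Set.mem_range_self l))).1 j)

lemma mem_of_sumCoords_eq_one (hB : IsFacetSystem P B) {i : ι} {x : E}
    (hx : ∀ j, 0 ≤ (B i).coord j x) (hi : (B i).sumCoords x = 1) : x ∈ P :=
  (hB.mem_iff x).2 fun k => (hB.sumCoords_le hx k).trans hi.le

lemma convexHull_insert_eq_union (hB : IsFacetSystem P B) {i : ι} {p : E}
    (hp : ∀ k ≠ i, (B k).sumCoords p ≤ 1) :
    convexHull ℝ (insert p P) = P ∪ convexHull ℝ (insert p (Set.range (B i))) := by
  have hrange : Set.range (B i) ⊆ P := Set.range_subset_iff.2 (hB.basis_mem i)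
  refine Set.Subset.antisymm (fun z hz => ?_) (Set.union_subset
    ((Set.subset_insert p P).trans (subset_convexHull ℝ _))
    (convexHull_mono (Set.insert_subset_insert hrange)))
  rw [convexHull_insert ⟨0, hB.zero_mem⟩, hB.convex.convexHull_eq, convexJoin_singleton_left,
    Set.mem_iUnion₂] at hz
  obtain ⟨x, hx, hz⟩ := hz
  have hmem {y : E} (hy : y ∈ segment ℝ p x) (hyi : (B i).sumCoords y ≤ 1) : y ∈ P := by
    refine (hB.mem_iff y).2 fun k => ?_
    obtain rfl | hk := eq_or_ne k i
    · exact hyi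
    · exact (convex_halfSpace_le (B k).sumCoords.isLinear 1).segment_subset (hp k hk)
        ((hB.mem_iff x).1 hx k) hy
  obtain hzi | hzi := le_total ((B i).sumCoords z) 1
  · exact Or.inl (hmem hz hzi)
  obtain ⟨y, hy, hyi⟩ : ∃ y ∈ segment ℝ z x, (B i).sumCoords y = 1 := by
    have h1 : (1 : ℝ) ∈ segment ℝ ((B i).sumCoords z) ((B i).sumCoords x) := by
      rw [segment_symm, segment_eq_Icc (((hB.mem_iff x).1 hx i).trans hzi)]
      exact ⟨(hB.mem_iff x).1 hx i, hzi⟩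
    exact (image_segment ℝ (B i).sumCoords.toAffineMap z x).ge h1
  have hpy : y ∈ segment ℝ p x :=
    (convex_segment p x).segment_subset hz (right_mem_segment ℝ p x) hy
  have hzy : z ∈ segment ℝ p y := by
    rw [mem_segment_iff_wbtw] at hz hy ⊢
    exact hz.trans_right_left hy
  refine Or.inr ((convex_convexHull ℝ _).segment_subset
    (subset_convexHull ℝ _ (Set.mem_insert p _)) ?_ hzy)
  exact convexHull_mono (Set.subset_insert p _)
    (hB.mem_convexHull_range_of_sumCoords_eq_one (hmem hpy hyi.le) hyi)

end ConvexHull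

section Variation

variable {d : ℕ} {ι : Type*} {P : Set (Euc d)} {B : ι → Module.Basis (Fin d) ℝ (Euc d)}

lemma setIntegral_convexHull_insert (hB : IsFacetSystem P B) (hP : IsCompact P) {i : ι}
    {p : Euc d} (hp : ∀ k ≠ i, (B k).sumCoords p ≤ 1) (hpi : 1 < (B i).sumCoords p)
    {φ : Euc d → ℝ} (hφ : Continuous φ) :
    ∫ x in convexHull ℝ (insert p P), φ x = (∫ x in P, φ x) + ((B i).sumCoords p - 1) *
      ∫ x in convexHull ℝ (Set.range (coneBasis (B i))), φ (coneMap (B i) p x) := by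
  have hQ : IsCompact (convexHull ℝ (insert p (Set.range (B i)))) :=
    ((Set.finite_range (B i)).insert p).isCompact_convexHull ℝ
  have hge : convexHull ℝ (insert p (Set.range (B i))) ⊆ {x | 1 ≤ (B i).sumCoords x} := by
    refine convexHull_min (Set.insert_subset hpi.le ?_)
      (convex_halfSpace_ge (B i).sumCoords.isLinear 1)
    rintro _ ⟨j, rfl⟩
    exact ((B i).sumCoords_self_apply j).ge
  have hne : (B i).sumCoords.toAffineMap ≠ AffineMap.const ℝ (Euc d) 1 := fun h => by
    simpa using DFunLike.congr_fun h 0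
  have hdisj : AEDisjoint volume P (convexHull ℝ (insert p (Set.range (B i)))) :=
    measure_mono_null (fun x hx => le_antisymm ((hB.mem_iff x).1 hx.1 i) (hge hx.2))
      (addHaar_setOf_eq_eq_zero volume hne)
  rw [hB.convexHull_insert_eq_union hp, setIntegral_union₀ hdisj hQ.nullMeasurableSet
    (hφ.continuousOn.integrableOn_compact hP) (hφ.continuousOn.integrableOn_compact hQ),
    setIntegral_convexHull_insert_range _ _ hpi.ne', abs_sub_comm, abs_of_pos (sub_pos.2 hpi)]

variable [Finite ι] {i : ι} {q : Euc d}

lemma eventually_sumCoords_smul_le_one (hB : IsFacetSystem P B)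
    (hq : ∀ j, 0 < (B i).coord j q) (hqi : (B i).sumCoords q = 1) :
    ∀ᶠ t : ℝ in 𝓝 0, ∀ k ≠ i, (B k).sumCoords ((1 + t) • q) ≤ 1 := by
  refine Filter.eventually_all.2 fun k => ?_
  by_cases hk : k = i
  · exact .of_forall fun t h => absurd hk h
  have hlt : (B k).sumCoords q < 1 :=
    lt_of_not_ge fun h => hk (hB.eq_of_forall_pos hq (hqi ▸ h)).symm
  have hcont : Continuous fun t : ℝ => (B k).sumCoords ((1 + t) • q) := by
    simp only [map_smul]
    fun_prop
  filter_upwards [(hcont.tendsto' 0 ((B k).sumCoords q) (by simp)).eventually_lt_const hlt]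
    with t ht _ using ht.le

lemma hasDerivWithinAt_setIntegral_convexHull_insert (hB : IsFacetSystem P B) (hP : IsCompact P)
    (hq : ∀ j, 0 < (B i).coord j q) (hqi : (B i).sumCoords q = 1) {φ : Euc d → ℝ}
    (hφ : Continuous φ) :
    HasDerivWithinAt (fun t : ℝ => ∫ x in convexHull ℝ (insert ((1 + t) • q) P), φ x)
      (∫ x in convexHull ℝ (Set.range (coneBasis (B i))), φ (coneMap (B i) q x))
      (Set.Ioi 0) 0 := by
  set I : ℝ → ℝ := fun t => ∫ x in convexHull ℝ (Set.range (coneBasis (B i))),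
    φ (coneMap (B i) ((1 + t) • q) x) with hI
  have hI_cont : Continuous I :=
    (continuous_setIntegral_coneMap (B i) volume hφ).comp
      (by fun_prop : Continuous fun t : ℝ => (1 + t) • q)
  have hI_zero : I 0 = ∫ x in convexHull ℝ (Set.range (coneBasis (B i))),
      φ (coneMap (B i) q x) := by
    simp only [hI, add_zero, one_smul]
  have hderiv := (hasDerivAt_mul_of_continuousAt_zero hI_cont.continuousAt).const_add
    (∫ x in P, φ x)
  refine (hI_zero ▸ hderiv.hasDerivWithinAt).congr_of_eventuallyEq ?_ ?_
  · filter_upwards [nhdsWithin_le_nhds (hB.eventually_sumCoords_smul_le_one hq hqi),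
      self_mem_nhdsWithin] with t ht (ht0 : 0 < t)
    have hsum : (B i).sumCoords ((1 + t) • q) = 1 + t := by
      rw [map_smul, hqi, smul_eq_mul, mul_one]
    rw [hB.setIntegral_convexHull_insert hP ht (by rw [hsum]; linarith) hφ, hsum,
      add_sub_cancel_left]
  · rw [add_zero, one_smul, zero_mul, add_zero,
      convexHull_insert_eq_self_of_mem hB.convex
        (hB.mem_of_sumCoords_eq_one (fun j => (hq j).le) hqi)]

lemma isVariation_convexHull_insert (hB : IsFacetSystem P B) (hP : IsConvexBody P)
    (hq : ∀ j, 0 < (B i).coord j q) (hqi : (B i).sumCoords q = 1) :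
    IsVariation P (fun t => convexHull ℝ (insert ((1 + t) • q) P)) fun φ =>
      ∫ x in convexHull ℝ (Set.range (coneBasis (B i))), φ (coneMap (B i) q x) where
  zero := by
    rw [add_zero, one_smul, convexHull_insert_eq_self_of_mem hB.convex
      (hB.mem_of_sumCoords_eq_one (fun j => (hq j).le) hqi)]
  isConvexBody := by
    filter_upwards [nhdsWithin_le_nhds (hB.eventually_sumCoords_smul_le_one hq hqi)] with t ht
    refine ⟨?_, convex_convexHull ℝ _, hP.2.2.mono
      (interior_mono ((Set.subset_insert _ P).trans (subset_convexHull ℝ _)))⟩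
    rw [hB.convexHull_insert_eq_union ht]
    exact hP.1.union (((Set.finite_range (B i)).insert _).isCompact_convexHull ℝ)
  tendsto_hausdorffDist := by
    refine squeeze_zero (fun _ => Metric.hausdorffDist_nonneg) (fun t =>
      hausdorffDist_convexHull_insert_le hB.convex
        (hB.mem_of_sumCoords_eq_one (fun j => (hq j).le) hqi)) ?_
    exact ((by fun_prop : Continuous fun t : ℝ => dist ((1 + t) • q) q).tendsto' 0 0
      (by simp)).mono_left nhdsWithin_le_nhds
  hasDerivWithinAt _ hφ := hB.hasDerivWithinAt_setIntegral_convexHull_insert hP.1 hq hqi hφ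

end Variation

end IsFacetSystem

section Critical

lemma norm_add_sum_sq_add_sum_norm_sq {F ν : Type*} [NormedAddCommGroup F] [InnerProductSpace ℝ F]
    [Fintype ν] (u : ν → F) (q : F) :
    ‖q + ∑ j, u j‖ ^ 2 + (‖q‖ ^ 2 + ∑ j, ‖u j‖ ^ 2) =
      2 * ⟪q, q + ∑ j, u j⟫ + ∑ j, ⟪u j, u j + ∑ m, u m⟫ := by
  simp_rw [norm_add_sq_real, inner_add_right, sum_add_distrib, ← sum_inner,
    real_inner_self_eq_norm_sq]
  ring

lemma eq_zero_of_sum_weighted_eq_zero {ι ν : Type*} [Fintype ι] [Fintype ν] {w : ι → ℝ}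
    {x : ι → ν → ℝ} {σ : ℝ} (hσ : σ ≠ 0) (hw : ∀ i, 0 < w i)
    (hsum : ∑ i, w i * ∑ j, x i j = 0) (hle : ∀ i m, σ * (2 * x i m + ∑ j, x i j) ≤ 0)
    (i : ι) (m : ν) : x i m = 0 := by
  have hrow_le (i : ι) : σ * ∑ j, x i j ≤ 0 := by
    have h := sum_nonpos fun m (_ : m ∈ univ) => hle i m
    rw [← mul_sum, sum_add_distrib, ← mul_sum, sum_const, card_univ, nsmul_eq_mul, ← add_mul,
      mul_left_comm] at h
    exact nonpos_of_mul_nonpos_right h (by positivity)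
  have hrow (i : ι) : ∑ j, x i j = 0 := by
    have htotal : ∑ i, w i * (σ * ∑ j, x i j) = 0 := by
      simp_rw [mul_left_comm (w _), ← mul_sum, hsum, mul_zero]
    have h := (sum_eq_zero_iff_of_nonpos fun i _ =>
      mul_nonpos_of_nonneg_of_nonpos (hw i).le (hrow_le i)).1 htotal i (mem_univ i)
    simpa [(hw i).ne', hσ] using h
  have hx_le (m : ν) : σ * x i m ≤ 0 := by
    have h := hle i m
    rw [hrow] at h
    linarith
  have h := (sum_eq_zero_iff_of_nonpos fun m _ => hx_le m).1
    (by rw [← mul_sum, hrow, mul_zero]) m (mem_univ m)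
  exact (mul_eq_zero.1 h).resolve_left hσ

lemma basis_mem_closure_setOf_coord_pos {E ν : Type*} [NormedAddCommGroup E] [NormedSpace ℝ E]
    [Finite ν] (b : Module.Basis ν ℝ E) (m : ν) :
    b m ∈ closure {q | (∀ j, 0 < b.coord j q) ∧ b.sumCoords q = 1} := by
  classical
  have := Fintype.ofFinite ν
  set p : ℝ → E := fun ε => (1 + Fintype.card ν * ε)⁻¹ • (b m + ε • ∑ j, b j) with hp
  have hp_zero : p 0 = b m := by simp [hp]
  have hp_cont : ContinuousAt p 0 :=
    ContinuousAt.smul (ContinuousAt.inv₀ (by fun_prop) (by simp)) (by fun_prop)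
  refine mem_closure_of_tendsto (hp_zero ▸ hp_cont.tendsto.mono_left nhdsWithin_le_nhds :
    Filter.Tendsto p (𝓝[>] 0) (𝓝 (b m))) ?_
  filter_upwards [self_mem_nhdsWithin] with ε (hε : 0 < ε)
  have hpos : 0 < 1 + Fintype.card ν * ε := by positivity
  refine ⟨fun j => ?_, ?_⟩
  · have hcoord : b.coord j (p ε) =
        (1 + Fintype.card ν * ε)⁻¹ * ((if m = j then 1 else 0) + ε) := by
      simp [hp, Finsupp.single_apply, mul_add]
    rw [hcoord]
    split_ifs <;> positivity
  · simp only [hp, map_smul, map_add, map_sum, b.sumCoords_self_apply, sum_const, card_univ,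
      nsmul_eq_mul, smul_eq_mul, mul_one]
    rw [mul_comm ε, inv_mul_cancel₀ hpos.ne']

lemma isConvexBody_convexHull_range_affineBasis {d : ℕ} {I : Type*} [Finite I]
    (b : AffineBasis I ℝ (Euc d)) : IsConvexBody (convexHull ℝ (Set.range b)) :=
  ⟨isCompact_convexHull_range_affineBasis b, convex_convexHull ℝ _,
    interior_convexHull_nonempty_iff_affineSpan_eq_top.2 b.tot⟩

end Critical

namespace IsFacetSystem

variable {d : ℕ} {ι : Type*} {P : Set (Euc d)} {B : ι → Module.Basis (Fin d) ℝ (Euc d)}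

lemma eq_iUnion_convexHull_range_coneBasis (hB : IsFacetSystem P B) :
    P = ⋃ i, convexHull ℝ (Set.range (coneBasis (B i))) := by
  ext x
  simp only [Set.mem_iUnion, mem_convexHull_range_coneBasis]
  refine ⟨fun hx => ?_, fun ⟨i, hpos, hi⟩ =>
    (hB.mem_iff x).2 fun k => (hB.sumCoords_le hpos k).trans hi⟩
  obtain ⟨i, hi⟩ := hB.cover x
  exact ⟨i, hi, (hB.mem_iff x).1 hx i⟩

lemma aedisjoint_convexHull_range_coneBasis (hB : IsFacetSystem P B) {i k : ι} (hik : i ≠ k) :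
    AEDisjoint volume (convexHull ℝ (Set.range (coneBasis (B i))))
      (convexHull ℝ (Set.range (coneBasis (B k)))) := by
  have hne (j : Fin d) : ((B i).coord j).toAffineMap ≠ AffineMap.const ℝ (Euc d) 0 := fun h => by
    simpa using DFunLike.congr_fun h (B i j)
  refine measure_mono_null (fun x ⟨hi, hk⟩ => ?_)
    (measure_iUnion_null fun j => addHaar_setOf_eq_eq_zero volume (hne j))
  rw [mem_convexHull_range_coneBasis] at hi hk
  by_contra hx
  simp only [Set.mem_iUnion, not_exists] at hx
  exact hik (hB.eq_of_forall_pos (fun j => (hi.1 j).lt_of_ne' (hx j)) (hB.sumCoords_le hk.1 i))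

lemma setIntegral_eq_sum [Fintype ι] (hB : IsFacetSystem P B) {φ : Euc d → ℝ}
    (hφ : Continuous φ) (hP : IsCompact P) :
    ∫ x in P, φ x = ∑ i, ∫ x in convexHull ℝ (Set.range (coneBasis (B i))), φ x := by
  have hint : IntegrableOn φ P := hφ.continuousOn.integrableOn_compact hP
  rw [hB.eq_iUnion_convexHull_range_coneBasis] at hint ⊢
  rw [integral_iUnion_ae (fun i =>
    (isCompact_convexHull_range_affineBasis (coneBasis (B i))).measurableSet.nullMeasurableSet)
    (fun i k => hB.aedisjoint_convexHull_range_coneBasis) hint, tsum_fintype]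

section CriticalPoint

variable [Finite ι] (hB : IsFacetSystem P B) (hP : IsConvexBody P)
include hB hP

lemma mul_inner_add_sum_nonpos {σ : ℝ}
    (hσ : ∀ K δ, IsVariation P K δ → σ * (δ (fun x => ‖x‖ ^ 2) - (d + 2) * δ fun _ => 1) ≤ 0)
    {i : ι} {q : Euc d} (hq : ∀ j, 0 < (B i).coord j q) (hqi : (B i).sumCoords q = 1) :
    σ * (2 * (⟪q, q + ∑ j, B i j⟫ - (d + 1) * (d + 2)) +
      ∑ j, (⟪B i j, B i j + ∑ m, B i m⟫ - (d + 1) * (d + 2))) ≤ 0 := by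
  have hvol := (isConvexBody_convexHull_range_affineBasis (coneBasis (B i))).volume_real_pos
  have h := hσ _ _ (hB.isVariation_convexHull_insert hP hq hqi)
  rw [setIntegral_norm_sq_coneMap, norm_add_sum_sq_add_sum_norm_sq, setIntegral_const,
    smul_eq_mul, mul_one, Fintype.card_fin] at h
  rw [sum_sub_distrib, sum_const, card_univ, Fintype.card_fin, nsmul_eq_mul]
  refine nonpos_of_mul_nonpos_right (a := volume.real (convexHull ℝ (Set.range (coneBasis (B i)))) /
    ((d + 1) * (d + 2))) ?_ (by positivity)
  refine le_of_eq_of_le ?_ h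
  field_simp
  ring

lemma mul_inner_basis_add_sum_nonpos {σ : ℝ}
    (hσ : ∀ K δ, IsVariation P K δ → σ * (δ (fun x => ‖x‖ ^ 2) - (d + 2) * δ fun _ => 1) ≤ 0)
    (i : ι) (m : Fin d) :
    σ * (2 * (⟪B i m, B i m + ∑ j, B i j⟫ - (d + 1) * (d + 2)) +
      ∑ j, (⟪B i j, B i j + ∑ m, B i m⟫ - (d + 1) * (d + 2))) ≤ 0 := by
  have hclosed : IsClosed {q : Euc d | σ * (2 * (⟪q, q + ∑ j, B i j⟫ - (d + 1) * (d + 2)) +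
      ∑ j, (⟪B i j, B i j + ∑ m, B i m⟫ - (d + 1) * (d + 2))) ≤ 0} :=
    isClosed_le (by fun_prop) continuous_const
  exact closure_minimal (fun q hq => hB.mul_inner_add_sum_nonpos hP hσ hq.1 hq.2) hclosed
    (basis_mem_closure_setOf_coord_pos (B i) m)

omit [Finite ι] in
lemma sum_volume_mul_sum_inner_eq_zero [Fintype ι] (hiso : IsIsotropic P) :
    ∑ i, volume.real (convexHull ℝ (Set.range (coneBasis (B i)))) *
      ∑ j, (⟪B i j, B i j + ∑ m, B i m⟫ - (d + 1) * (d + 2)) = 0 := by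
  have hcone (i : ι) : ∫ x in convexHull ℝ (Set.range (coneBasis (B i))), ‖x‖ ^ 2 =
      volume.real (convexHull ℝ (Set.range (coneBasis (B i)))) / ((d + 1) * (d + 2)) *
        ∑ j, ⟪B i j, B i j + ∑ m, B i m⟫ := by
    have h := setIntegral_norm_sq_coneMap (B i) volume 0
    rw [norm_add_sum_sq_add_sum_norm_sq, Fintype.card_fin] at h
    simpa [coneMap_apply] using h
  have hvol : volume.real P = ∑ i, volume.real (convexHull ℝ (Set.range (coneBasis (B i)))) := by
    simpa using hB.setIntegral_eq_sum (φ := fun _ => 1) continuous_const hP.1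
  have hnorm := hiso.setIntegral_norm_sq hP
  rw [hB.setIntegral_eq_sum (by fun_prop) hP.1, hvol, mul_sum, ← sub_eq_zero,
    ← sum_sub_distrib] at hnorm
  rw [← mul_zero (((d : ℝ) + 1) * (d + 2)), ← hnorm, mul_sum]
  refine sum_congr rfl fun i _ => ?_
  rw [hcone, sum_sub_distrib, sum_const, card_univ, Fintype.card_fin, nsmul_eq_mul]
  field_simp

theorem inner_basis_eq (hd : d ≠ 0) (hiso : IsIsotropic P) (hext : IsLocalExtremumOfIsoConst P)
    (i : ι) (m : Fin d) : ⟪B i m, B i m + ∑ j, B i j⟫ = (d + 1) * (d + 2) := by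
  have := Fintype.ofFinite ι
  obtain ⟨σ, hσ, hvar⟩ := hext.exists_mul_variation_nonpos hd hiso
  exact sub_eq_zero.1 (eq_zero_of_sum_weighted_eq_zero hσ
    (fun i => (isConvexBody_convexHull_range_affineBasis (coneBasis (B i))).volume_real_pos)
    (hB.sum_volume_mul_sum_inner_eq_zero hP hiso)
    (hB.mul_inner_basis_add_sum_nonpos hP hvar) i m)

end CriticalPoint

end IsFacetSystem

section ConvexBody

lemma IsConvexBody.centroid_mem_interior {d : ℕ} {K : Set (Euc d)} (hK : IsConvexBody K) :
    centroid K ∈ interior K := by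
  obtain ⟨y, hy⟩ := hK.2.2
  obtain ⟨r, hr, hball⟩ := Metric.nhds_basis_closedBall.mem_iff.1 (isOpen_interior.mem_nhds hy)
  have hint : IntegrableOn (fun x : Euc d => x) K :=
    continuous_id.continuousOn.integrableOn_compact hK.1
  have : IsFiniteMeasure (volume.restrict K) := ⟨by simpa using hK.1.measure_lt_top⟩
  have hpos : volume.restrict K (Metric.closedBall y r) ≠ 0 := by
    rw [Measure.restrict_eq_self _ (hball.trans interior_subset)]
    exact (Metric.measure_closedBall_pos volume y hr).ne'
  have hmem : ⨍ x in Metric.closedBall y r, x ∂volume.restrict K ∈ interior K :=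
    hball ((convex_closedBall y r).set_average_mem Metric.isClosed_closedBall hpos (by finiteness)
      (ae_restrict_mem measurableSet_closedBall) hint.integrableOn)
  have h := hK.2.1.average_mem_interior_of_set hpos (ae_restrict_mem hK.1.measurableSet) hint hmem
  rwa [setAverage_eq] at h

end ConvexBody

section ExposedFaces

variable {V : Type*} [NormedAddCommGroup V] [NormedSpace ℝ V]

lemma eq_zero_of_forall_mem_apply_nonpos {P : Set V} (h0 : 0 ∈ interior P) {f : StrongDual ℝ V}
    (hf : ∀ x ∈ P, f x ≤ 0) : f = 0 := by
  have hmax : IsLocalMax f 0 := by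
    filter_upwards [mem_interior_iff_mem_nhds.1 h0] with x hx
    simpa using hf x hx
  simpa only [f.fderiv] using hmax.fderiv_eq_zero

lemma exists_eq_setOf_apply_eq_one_of_isExposed {P F : Set V} (h0 : 0 ∈ interior P)
    (hF : IsExposed ℝ P F) (hne : F.Nonempty) (hFP : F ≠ P) :
    ∃ f : StrongDual ℝ V, (∀ x ∈ P, f x ≤ 1) ∧ F = {x ∈ P | f x = 1} := by
  obtain ⟨l, hl⟩ := hF hne
  obtain ⟨a, ha⟩ := hne
  have hmax : ∀ x ∈ P, l x ≤ l a := (hl.le ha).2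
  have hpos : 0 < l a := by
    refine lt_of_le_of_ne (by simpa using hmax 0 (interior_subset h0)) fun h => hFP ?_
    have hl0 := eq_zero_of_forall_mem_apply_nonpos h0 (h ▸ hmax)
    simp [hl, hl0]
  have hle : ∀ x ∈ P, ((l a)⁻¹ • l) x ≤ 1 := fun x hx => (inv_mul_le_one₀ hpos).2 (hmax x hx)
  refine ⟨(l a)⁻¹ • l, hle, ?_⟩
  ext x
  rw [hl]
  refine and_congr_right fun hx => ?_
  rw [smul_apply, smul_eq_mul, inv_mul_eq_one₀ hpos.ne', eq_comm]
  exact ⟨fun h => (hmax x hx).antisymm (h a (hl.le ha).1), fun h y hy => h ▸ hmax y hy⟩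

lemma isExposed_setOf_apply_eq {P : Set V} {f : StrongDual ℝ V} {c : ℝ} (hf : ∀ x ∈ P, f x ≤ c) :
    IsExposed ℝ P {x ∈ P | f x = c} := by
  rintro ⟨a, ha, rfl⟩
  refine ⟨f, Set.ext fun x => and_congr_right fun hx => ?_⟩
  exact ⟨fun h y hy => h ▸ hf y hy, fun h => (hf x hx).antisymm (h a ha)⟩

lemma exists_mem_extremePoints_forall_apply_le {K : Set V} (hK : IsCompact K) (hne : K.Nonempty)
    (f : StrongDual ℝ V) : ∃ y ∈ K.extremePoints ℝ, ∀ z ∈ K, f z ≤ f y := by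
  have hexp : IsExposed ℝ K (f.toExposed K) := ContinuousLinearMap.toExposed.isExposed
  obtain ⟨z, hz, hmax⟩ := hK.exists_isMaxOn hne f.continuous.continuousOn
  obtain ⟨y, hy⟩ := (hexp.isCompact hK).extremePoints_nonempty ⟨z, hz, hmax⟩
  exact ⟨y, hexp.isExtreme.extremePoints_subset_extremePoints hy, hy.1.2⟩

lemma finite_setOf_isExposed_of_isPolytope {P : Set V} (hP : IsPolytope P) :
    {F | IsExposed ℝ P F}.Finite := by
  obtain ⟨S, rfl⟩ := hP
  have hcompact := S.finite_toSet.isCompact_convexHull ℝ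
  have hclosure (F : Set V) (hF : IsExposed ℝ (convexHull ℝ S) F) :
      closure (convexHull ℝ (F.extremePoints ℝ)) = F :=
    closure_convexHull_extremePoints (hF.isCompact hcompact) (hF.convex (convex_convexHull ℝ _))
  refine Set.Finite.of_finite_image (f := Set.extremePoints ℝ)
    (S.finite_toSet.finite_subsets.subset ?_) fun F hF G hG hFG => ?_
  · rintro _ ⟨F, hF, rfl⟩
    exact (IsExposed.isExtreme hF).extremePoints_subset_extremePoints.trans
      extremePoints_convexHull_subset
  · rw [← hclosure F hF, ← hclosure G hG, hFG]

end ExposedFaces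

lemma vectorSpan_eq_ker_of_span_eq_top {𝕜 V : Type*} [Field 𝕜] [AddCommGroup V] [Module 𝕜 V]
    {F : Set V} (hne : F.Nonempty) (hspan : Submodule.span 𝕜 F = ⊤) {f : V →ₗ[𝕜] 𝕜}
    (hf : ∀ x ∈ F, f x = 1) : vectorSpan 𝕜 F = LinearMap.ker f := by
  obtain ⟨a, ha⟩ := hne
  refine le_antisymm (Submodule.span_le.2 ?_) fun x hx => ?_
  · rintro _ ⟨p, hp, q, hq, rfl⟩
    simp [hf p hp, hf q hq]
  · have hle : Submodule.span 𝕜 F ≤ (vectorSpan 𝕜 F).comap (LinearMap.id - f.smulRight a) :=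
      Submodule.span_le.2 fun y hy => by simpa [hf y hy] using vsub_mem_vectorSpan 𝕜 hy ha
    have hfx : f x = 0 := hx
    have hmem := hle (hspan ▸ Submodule.mem_top : x ∈ Submodule.span 𝕜 F)
    simpa [hfx] using hmem

lemma sdim_eq_of_span_eq_top {V : Type*} [NormedAddCommGroup V] [NormedSpace ℝ V]
    [FiniteDimensional ℝ V] {F : Set V} (hne : F.Nonempty) (hspan : Submodule.span ℝ F = ⊤)
    {f : V →ₗ[ℝ] ℝ} (hf : ∀ x ∈ F, f x = 1) : sdim F = Module.finrank ℝ V - 1 := by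
  have hf0 : f ≠ 0 := by
    rintro rfl
    obtain ⟨a, ha⟩ := hne
    simpa using hf a ha
  rw [sdim, direction_affineSpan, vectorSpan_eq_ker_of_span_eq_top hne hspan hf,
    ← Module.Dual.finrank_ker_add_one_of_ne_zero hf0, Nat.add_sub_cancel]

section Polar

variable {V : Type*} [NormedAddCommGroup V] [InnerProductSpace ℝ V] {S : Set V}

/-- The one-sided polar `S° = {y | ⟪s, y⟫ ≤ 1 for all s ∈ S}`; its extreme points describe the
facets of the convex hull of `S`. -/
def polarSet (S : Set V) : Set V := {y | ∀ s ∈ S, ⟪s, y⟫ ≤ 1}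

lemma zero_mem_polarSet : 0 ∈ polarSet S := fun s _ => by simp

lemma inner_le_one_of_mem_convexHull {x y : V} (hx : x ∈ convexHull ℝ S) (hy : y ∈ polarSet S) :
    ⟪y, x⟫ ≤ 1 := by
  refine convexHull_min (t := {x | innerₛₗ ℝ y x ≤ 1}) (fun s hs => ?_)
    (convex_halfSpace_le (innerₛₗ ℝ y).isLinear 1) hx
  simpa only [Set.mem_ofPred_eq, innerₛₗ_apply_apply, real_inner_comm] using hy s hs

lemma isCompact_polarSet [FiniteDimensional ℝ V] (h0 : 0 ∈ interior (convexHull ℝ S)) :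
    IsCompact (polarSet S) := by
  obtain ⟨r, hr, hball⟩ := Metric.nhds_basis_closedBall.mem_iff.1 (mem_interior_iff_mem_nhds.1 h0)
  refine (isCompact_closedBall (0 : V) r⁻¹).of_isClosed_subset ?_ fun y hy => ?_
  · simp only [polarSet, Set.ofPred_forall]
    exact isClosed_iInter fun s => isClosed_iInter fun _ => isClosed_le (by fun_prop) (by fun_prop)
  rw [mem_closedBall_zero_iff]
  obtain rfl | hy0 := eq_or_ne y 0
  · simpa using hr.le
  have hmem : (r / ‖y‖) • y ∈ convexHull ℝ S := by
    refine hball (mem_closedBall_zero_iff.2 ?_)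
    rw [norm_smul, norm_div, norm_norm, div_mul_cancel₀ _ (norm_ne_zero_iff.2 hy0),
      Real.norm_of_nonneg hr.le]
  have h := inner_le_one_of_mem_convexHull hmem hy
  rw [real_inner_smul_right, real_inner_self_eq_norm_sq, pow_two, ← mul_assoc,
    div_mul_cancel₀ _ (norm_ne_zero_iff.2 hy0)] at h
  rwa [← one_div, le_div_iff₀' hr]

lemma polarSet_mem_nhds_zero (hS : S.Finite) : polarSet S ∈ 𝓝 0 := by
  refine (Filter.eventually_all_finite hS).2 fun s _ => ?_
  have hcont : Continuous fun y : V => ⟪s, y⟫ := by fun_prop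
  exact ((hcont.tendsto' 0 0 (by simp)).eventually_lt_const one_pos).mono fun y => le_of_lt

lemma mem_convexHull_of_forall_inner_le_one [CompleteSpace V] (hS : S.Finite)
    (h0 : 0 ∈ convexHull ℝ S) {x : V} (hx : ∀ y ∈ polarSet S, ⟪x, y⟫ ≤ 1) :
    x ∈ convexHull ℝ S := by
  by_contra hxS
  obtain ⟨f, u, hfu, hux⟩ := geometric_hahn_banach_closed_point (convex_convexHull ℝ S)
    (hS.isClosed_convexHull ℝ) hxS
  have hu : 0 < u := by simpa using hfu 0 h0
  have hinner (z : V) : ⟪z, u⁻¹ • (InnerProductSpace.toDual ℝ V).symm f⟫ = u⁻¹ * f z := by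
    rw [inner_smul_right, real_inner_comm, InnerProductSpace.toDual_symm_apply]
  have hle := hx (u⁻¹ • (InnerProductSpace.toDual ℝ V).symm f) fun s hs => by
    rw [hinner, inv_mul_le_one₀ hu]
    exact (hfu s (subset_convexHull ℝ S hs)).le
  rw [hinner, inv_mul_le_one₀ hu] at hle
  exact hle.not_gt hux

lemma span_inner_eq_one_eq_top_of_mem_extremePoints [FiniteDimensional ℝ V] (hS : S.Finite) {y : V}
    (hy : y ∈ (polarSet S).extremePoints ℝ) : Submodule.span ℝ {s ∈ S | ⟪s, y⟫ = 1} = ⊤ := by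
  rw [← Submodule.orthogonal_eq_bot_iff, Submodule.eq_bot_iff]
  intro u hu
  have hu_active {s : V} (hs : s ∈ S) (h : ⟪s, y⟫ = 1) : ⟪s, u⟫ = 0 :=
    hu s (Submodule.subset_span ⟨hs, h⟩)
  have hmem : ∀ᶠ ε : ℝ in 𝓝 0, y + ε • u ∈ polarSet S := by
    refine (Filter.eventually_all_finite hS).2 fun s hs => ?_
    obtain h | h := (hy.1 s hs).lt_or_eq
    · have hcont : Continuous fun ε : ℝ => ⟪s, y + ε • u⟫ := by fun_prop
      exact ((hcont.tendsto' 0 ⟪s, y⟫ (by simp)).eventually_lt_const h).mono fun ε => le_of_lt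
    · refine .of_forall fun ε => ?_
      rw [inner_add_right, inner_smul_right, hu_active hs h, mul_zero, add_zero, h]
  have hmem_neg : ∀ᶠ ε : ℝ in 𝓝 0, y + (-ε) • u ∈ polarSet S :=
    (continuous_neg.tendsto' 0 0 neg_zero).eventually hmem
  obtain ⟨ε, ⟨hplus, hminus⟩, hε : 0 < ε⟩ :=
    (((hmem.and hmem_neg).filter_mono (nhdsWithin_le_nhds (s := Set.Ioi 0))).and
      self_mem_nhdsWithin).exists
  have hseg : y ∈ openSegment ℝ (y + ε • u) (y + (-ε) • u) :=
    ⟨1 / 2, 1 / 2, by norm_num, by norm_num, by norm_num, by module⟩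
  simpa [hε.ne'] using hy.2 hplus hminus hseg

variable [FiniteDimensional ℝ V]

lemma isFacetOf_setOf_inner_eq_one [Nontrivial V] (hS : S.Finite) {y : V}
    (hy : y ∈ (polarSet S).extremePoints ℝ) :
    IsFacetOf (Module.finrank ℝ V) (convexHull ℝ S) {x ∈ convexHull ℝ S | ⟪y, x⟫ = 1} := by
  have hsub : {s ∈ S | ⟪s, y⟫ = 1} ⊆ {x ∈ convexHull ℝ S | ⟪y, x⟫ = 1} := fun s hs =>
    ⟨subset_convexHull ℝ S hs.1, real_inner_comm s y ▸ hs.2⟩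
  have hspan : Submodule.span ℝ {x ∈ convexHull ℝ S | ⟪y, x⟫ = 1} = ⊤ :=
    top_le_iff.1 (span_inner_eq_one_eq_top_of_mem_extremePoints hS hy ▸ Submodule.span_mono hsub)
  have hne : {x ∈ convexHull ℝ S | ⟪y, x⟫ = 1}.Nonempty := by
    by_contra h
    rw [Set.not_nonempty_iff_eq_empty.1 h, Submodule.span_empty] at hspan
    exact bot_ne_top hspan
  exact ⟨isExposed_setOf_apply_eq (f := innerSL ℝ y) fun x hx =>
    inner_le_one_of_mem_convexHull hx hy.1,
    sdim_eq_of_span_eq_top hne hspan (f := innerₛₗ ℝ y) fun x hx => hx.2⟩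

/-- The facet met by the ray through `x` is dual to a point of the polar maximizing `⟪x, ·⟫`. -/
lemma exists_isFacetOf_smul_mem (hS : S.Finite) (h0 : 0 ∈ interior (convexHull ℝ S)) {x : V}
    (hx : x ≠ 0) :
    ∃ F, IsFacetOf (Module.finrank ℝ V) (convexHull ℝ S) F ∧ ∃ r : ℝ, 0 < r ∧ r • x ∈ F := by
  have : Nontrivial V := ⟨x, 0, hx⟩
  obtain ⟨y, hy, hmax⟩ := exists_mem_extremePoints_forall_apply_le (isCompact_polarSet h0)
    ⟨0, zero_mem_polarSet⟩ (innerSL ℝ x)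
  have hpos : 0 < ⟪x, y⟫ := by
    by_contra! hle
    have hzero := eq_zero_of_forall_mem_apply_nonpos
      (mem_interior_iff_mem_nhds.2 (polarSet_mem_nhds_zero hS)) fun z hz => (hmax z hz).trans hle
    exact hx (by simpa using DFunLike.congr_fun hzero x)
  refine ⟨_, isFacetOf_setOf_inner_eq_one hS hy, ⟪x, y⟫⁻¹, inv_pos.2 hpos, ?_, ?_⟩
  · refine mem_convexHull_of_forall_inner_le_one hS (interior_subset h0) fun z hz => ?_
    rw [real_inner_smul_left, inv_mul_le_one₀ hpos]
    exact hmax z hz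
  · rw [inner_smul_right, real_inner_comm x y, inv_mul_cancel₀ hpos.ne']

end Polar

lemma linearIndependent_of_affineIndependent_of_apply_eq_one {𝕜 V ι : Type*} [Ring 𝕜]
    [AddCommGroup V] [Module 𝕜 V] {w : ι → V} (hw : AffineIndependent 𝕜 w)
    {f : V →ₗ[𝕜] 𝕜} (hf : ∀ j, f (w j) = 1) : LinearIndependent 𝕜 w := by
  refine linearIndependent_iff'.2 fun s g hg => ?_
  have hsum : ∑ j ∈ s, g j = 0 := by simpa [hf] using congrArg f hg
  exact affineIndependent_iff.1 hw s g hsum hg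

lemma basis_mem_extremePoints {V ν : Type*} [AddCommGroup V] [Module ℝ V] [Finite ν]
    (b : Module.Basis ν ℝ V) (j : ν) : b j ∈ (convexHull ℝ (Set.range b)).extremePoints ℝ := by
  have := Fintype.ofFinite ν
  refine mem_extremePoints_iff_left.2 ⟨subset_convexHull ℝ _ (Set.mem_range_self j), ?_⟩
  rintro x hx y hy ⟨α, β, hα, hβ, -, hxy⟩
  rw [mem_convexHull_range_basis] at hx hy
  have hzero (m : ν) (hm : m ≠ j) : b.coord m x = 0 := by
    have h : α * b.coord m x + β * b.coord m y = 0 := by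
      simpa [hm.symm] using congrArg (b.coord m) hxy
    exact (mul_eq_zero.1 ((add_eq_zero_iff_of_nonneg (mul_nonneg hα.le (hx.1 m))
      (mul_nonneg hβ.le (hy.1 m))).1 h).1).resolve_left hα.ne'
  have hone : b.coord j x = 1 := by
    rw [← hx.2, sumCoords_eq_sum_coord, sum_eq_single j (fun m _ => hzero m) (by simp)]
  rw [← sum_coord_smul_basis b x,
    sum_eq_single j (fun m _ hm => by rw [hzero m hm, zero_smul]) (by simp), hone, one_smul]

section SimplicialPolytope

variable {d : ℕ} {P : Set (Euc d)}

lemma IsSimplicialPolytope.ne_zero (hP : IsSimplicialPolytope d P) (hne : P.Nonempty) : d ≠ 0 := by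
  rintro rfl
  obtain ⟨w, -, hw⟩ := hP.2.2 P ⟨.refl P, hP.2.1⟩
  rw [Set.range_eq_empty, convexHull_empty] at hw
  exact hne.ne_empty hw

lemma IsSimplicialPolytope.exists_basis (hP : IsSimplicialPolytope d P) (h0 : 0 ∈ interior P)
    {F : Set (Euc d)} (hF : IsFacetOf d P F) : ∃ b : Module.Basis (Fin d) ℝ (Euc d),
      F = convexHull ℝ (Set.range b) ∧ (∀ x ∈ P, b.sumCoords x ≤ 1) ∧
        F = {x ∈ P | b.sumCoords x = 1} := by
  have hd := hP.ne_zero ⟨0, interior_subset h0⟩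
  have : NeZero d := ⟨hd⟩
  obtain ⟨w, hw, hFw⟩ := hP.2.2 F hF
  have hwF (j : Fin d) : w j ∈ F := hFw ▸ subset_convexHull ℝ _ (Set.mem_range_self j)
  have hFP : F ≠ P := by
    rintro rfl
    have := hF.2.symm.trans hP.2.1
    omega
  obtain ⟨f, hle, hFf⟩ := exists_eq_setOf_apply_eq_one_of_isExposed h0 hF.1 ⟨w 0, hwF 0⟩ hFP
  have hfw (j : Fin d) : f (w j) = 1 := (hFf.le (hwF j)).2
  let b := basisOfLinearIndependentOfCardEqFinrank
    (linearIndependent_of_affineIndependent_of_apply_eq_one hw (f := f.toLinearMap) hfw) (by simp)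
  have hb : ⇑b = w := coe_basisOfLinearIndependentOfCardEqFinrank _ _
  have hbf : b.sumCoords = f.toLinearMap :=
    b.ext fun j => by rw [b.sumCoords_self_apply, hb]; exact (hfw j).symm
  exact ⟨b, hb ▸ hFw, hbf ▸ hle, hbf ▸ hFf⟩

variable {B : {F // IsFacetOf d P F} → Module.Basis (Fin d) ℝ (Euc d)}

lemma IsPolytope.exists_forall_coord_nonneg (hP : IsPolytope P) (hd : d ≠ 0)
    (h0 : 0 ∈ interior P) (hhull : ∀ i, i.1 = convexHull ℝ (Set.range (B i))) (x : Euc d) :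
    ∃ i, ∀ j, 0 ≤ (B i).coord j x := by
  have : NeZero d := ⟨hd⟩
  obtain ⟨S, rfl⟩ := hP
  have hfacet {v : Euc d} (hv : v ≠ 0) : ∃ i, ∀ j, 0 ≤ (B i).coord j v := by
    obtain ⟨F, hF, r, hr, hrv⟩ := exists_isFacetOf_smul_mem S.finite_toSet h0 hv
    rw [finrank_euclideanSpace_fin] at hF
    refine ⟨⟨F, hF⟩, fun j => ?_⟩
    have h := ((mem_convexHull_range_basis _).1 ((hhull ⟨F, hF⟩).le hrv)).1 j
    rwa [map_smul, smul_eq_mul, mul_nonneg_iff_of_pos_left hr] at h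
  obtain rfl | hx := eq_or_ne x 0
  · obtain ⟨v, hv⟩ := exists_ne (0 : Euc d)
    exact (hfacet hv).imp fun i _ j => by simp
  · exact hfacet hx

theorem IsSimplicialPolytope.exists_isFacetSystem (hP : IsSimplicialPolytope d P)
    (h0 : 0 ∈ interior P) : ∃ B : {F // IsFacetOf d P F} → Module.Basis (Fin d) ℝ (Euc d),
      IsFacetSystem P B ∧ ∀ i, i.1 = convexHull ℝ (Set.range (B i)) := by
  choose B hhull hle hslice using fun i : {F // IsFacetOf d P F} => hP.exists_basis h0 i.2
  have hrange (i) : Set.range (B i) ⊆ P :=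
    (subset_convexHull ℝ _).trans ((hhull i).ge.trans i.2.1.subset)
  have hcover := hP.1.exists_forall_coord_nonneg (hP.ne_zero ⟨0, interior_subset h0⟩) h0 hhull
  have hconvex : Convex ℝ P := by
    obtain ⟨⟨S, rfl⟩, -⟩ := hP
    exact convex_convexHull ℝ _
  refine ⟨B, ⟨hcover, fun x => ⟨fun hx i => hle i x hx, fun hx => ?_⟩,
    fun i j => hrange i (Set.mem_range_self j), fun i k m h => ?_,
    fun i k h => Subtype.ext (by rw [hhull i, hhull k, h])⟩, hhull⟩
  · obtain ⟨i, hi⟩ := hcover x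
    refine convexHull_min ?_ hconvex ((mem_convexHull_range_coneBasis (B i)).2 ⟨hi, hx i⟩)
    rw [range_coneBasis]
    exact Set.insert_subset (interior_subset h0) (hrange i)
  · refine extremePoints_convexHull_subset (𝕜 := ℝ) ?_
    have hext : B k m ∈ P.extremePoints ℝ :=
      k.2.1.isExtreme.extremePoints_subset_extremePoints
        (by rw [hhull k]; exact basis_mem_extremePoints (B k) m)
    rw [← hhull i]
    refine inter_extremePoints_subset_extremePoints_of_subset i.2.1.subset ⟨?_, hext⟩
    rw [hslice i]
    exact ⟨hext.1, h⟩

end SimplicialPolytope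

/-- If `P` is a `d`-dimensional isotropic simplicial polytope that is a local
extremum of the isotropic constant, then `P` is isohedral: for any two facets `F₁`, `F₂` of `P`
there is an isometry of `ℝ^d` mapping `P` onto itself and `F₁` onto `F₂`. -/
theorem stmt1 {d : ℕ} (P : Set (Euc d)) (hbody : IsConvexBody P)
    (hsimp : IsSimplicialPolytope d P) (hiso : IsIsotropic P)
    (hext : IsLocalExtremumOfIsoConst P)
    (F₁ F₂ : Set (Euc d)) (hF₁ : IsFacetOf d P F₁) (hF₂ : IsFacetOf d P F₂) :
    ∃ φ : Euc d ≃ᵢ Euc d, φ '' P = P ∧ φ '' F₁ = F₂ := by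
  have h0 : 0 ∈ interior P := hiso.1 ▸ hbody.centroid_mem_interior
  have : Finite {F // IsFacetOf d P F} :=
    ((finite_setOf_isExposed_of_isPolytope hsimp.1).subset fun F hF => hF.1).to_subtype
  obtain ⟨B, hB, hhull⟩ := hsimp.exists_isFacetSystem h0
  have hd : d ≠ 0 := hsimp.ne_zero ⟨0, interior_subset h0⟩
  obtain ⟨φ, hφP, hφ⟩ :=
    hB.exists_isometry (hB.inner_basis_eq hbody hd hiso hext) ⟨F₁, hF₁⟩ ⟨F₂, hF₂⟩
  refine ⟨φ.toIsometryEquiv, hφP, ?_⟩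
  calc φ '' F₁ = φ '' convexHull ℝ (Set.range (B ⟨F₁, hF₁⟩)) := by rw [← hhull ⟨F₁, hF₁⟩]
    _ = convexHull ℝ (φ '' Set.range (B ⟨F₁, hF₁⟩)) :=
      φ.toLinearEquiv.toLinearMap.image_convexHull _
    _ = F₂ := by rw [hφ, ← hhull ⟨F₂, hF₂⟩]

end
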